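/- One has φ(b) = n_J − n_{H*}, where n_J and n_{H*} denote the numbers of odd exponents of the finite Weyl groups W_J and W_{H*} respectively, and b is the shortest element of the double coset W_J μ W_J. -/

import Mathlib

set_option synthInstance.maxHeartbeats 1000000
set_option maxHeartbeats 2000000

open scoped Classical

noncomputable section

namespace LY

/-! ## The coefficient field `ℚ(q)` -/

/-- The field `ℚ(q)` of rational functions. -/
abbrev K : Type := RatFunc ℚ

/-- The indeterminate `q`. -/
def qK : K := RatFunc.X

/-- The inclusion `ℤ[q] → ℚ(q)`. -/
def toK (p : Polynomial ℤ) : K := algebraMap (Polynomial ℚ) K (p.map (Int.castRingHom ℚ))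

/-- Evaluation of `p ∈ ℤ[q]` at `−q`, as an element of `ℚ(q)`; i.e. `p(−q)`. -/
def atNegQ (p : Polynomial ℤ) : K := Polynomial.eval₂ (Int.castRingHom K) (-qK) p

/-- The standard basis element `T_w` (resp. `a_w`) of the function model `W → ℚ(q)`
of the Hecke algebra (resp. of the Lusztig–Vogan module `M`). -/
def TT {W : Type} (w : W) : W → K := fun y => if y = w then 1 else 0

variable {B W : Type} [Group W] {M : CoxeterMatrix B}

/-- The Bruhat order on a Coxeter group: `u ≤ v` iff `v` is obtained from `u` by successive
right multiplications by reflections, each increasing the length. -/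
def BruhatLE (cs : CoxeterSystem M W) (u v : W) : Prop :=
  Relation.ReflTransGen
    (fun a b => cs.length a < cs.length b ∧ ∃ t, cs.IsReflection t ∧ b = a * t) u v

/-- Connectedness of the Coxeter diagram of `M`. -/
def DiagramConnected (M : CoxeterMatrix B) : Prop :=
  ∀ i j : B, Relation.ReflTransGen (fun a b => a ≠ b ∧ M a b ≠ 2) i j

/-- An automorphism of `W` preserving the set `S` of simple reflections, i.e. an element
of `A = Aut(W,S)`. -/
def IsDiagAut (cs : CoxeterSystem M W) (a : MulAut W) : Prop :=
  (⇑a) '' (Set.range cs.simple) = Set.range cs.simple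

/-! ## The affine setting -/

/-- All the data and axioms describing the setting: `(W,S)` is the Coxeter group of an
untwisted connected affine Dynkin diagram (an irreducible affine Weyl group); `Λ` is the
subgroup of translations (elements with finite conjugacy class), free abelian of finite
rank and of finite index; `s₀` is a hyperspecial vertex, `J = S − {s₀}`, `W_J` is the
finite subgroup generated by `J` with longest element `w_J`; `*` is the involution of `W`
given by `w* = w_J w w_J` on `W_J` and `λ* = −(ʷᴶλ)` on `Λ`; `pr` is the projection
`W → W_J` along `Λ`; `ρ` is the conjugation action of `W` on `Λ_ℚ ≅ ℚ^rank`
(via the identification `freeIso` of `Λ` with `ℤ^rank`). -/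
structure AffineData (cs : CoxeterSystem M W) where
  finB : Finite B
  conn : DiagramConnected M
  infW : Infinite W
  /-- the subgroup `Λ` of translations -/
  Lam : Subgroup W
  hLam_mem : ∀ w : W, w ∈ Lam ↔ {x : W | IsConj w x}.Finite
  hLam_normal : Lam.Normal
  hLam_comm : ∀ a ∈ Lam, ∀ b ∈ Lam, a * b = b * a
  hLam_index : Lam.FiniteIndex
  /-- `Λ` is free abelian of finite rank -/
  rank : ℕ
  freeIso : Lam ≃* Multiplicative (Fin rank → ℤ)
  /-- the hyperspecial vertex `s₀` -/
  s0 : W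
  hs0_S : s0 ∈ Set.range cs.simple
  /-- `s₀` is hyperspecial: the projection `W → W/Λ` restricts to an isomorphism from the
  subgroup generated by `S − {s₀}` onto `W/Λ`. -/
  hs0_hyper : ∀ w : W, ∃! u : W,
    u ∈ Subgroup.closure (Set.range cs.simple \ {s0}) ∧ w * u⁻¹ ∈ Lam
  hWJ_fin : (Subgroup.closure (Set.range cs.simple \ {s0}) : Set W).Finite
  /-- the longest element `w_J` of `W_J` -/
  wJ : W
  hwJ_mem : wJ ∈ Subgroup.closure (Set.range cs.simple \ {s0})
  hwJ_max : ∀ u ∈ Subgroup.closure (Set.range cs.simple \ {s0}), cs.length u ≤ cs.length wJ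
  /-- the involution `*` of `W` -/
  st : MulAut W
  hst_inv : ∀ w : W, st (st w) = w
  hst_J : ∀ u ∈ Subgroup.closure (Set.range cs.simple \ {s0}), st u = wJ * u * wJ
  hst_Lam : ∀ l ∈ Lam, st l = (wJ * l * wJ⁻¹)⁻¹
  hst_S : ∀ s ∈ Set.range cs.simple, st s ∈ Set.range cs.simple
  /-- lower Bruhat intervals are finite -/
  hBruhat_fin : ∀ w : W, {y : W | BruhatLE cs y w}.Finite
  /-- the projection `W → W_J` along `Λ` (`w ↦ w̄`) -/
  pr : W → W
  hpr : ∀ w : W, pr w ∈ Subgroup.closure (Set.range cs.simple \ {s0}) ∧ w * (pr w)⁻¹ ∈ Lam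
  /-- the conjugation action of `W` on `Λ_ℚ ≅ ℚ^rank` -/
  rho : W → ((Fin rank → ℚ) →ₗ[ℚ] (Fin rank → ℚ))
  hrho : ∀ (w : W) (l : Lam),
    rho w (fun i => ((Multiplicative.toAdd (freeIso l)) i : ℚ)) =
      fun i => ((Multiplicative.toAdd
        (freeIso ⟨w * (l : W) * w⁻¹, hLam_normal.conj_mem _ l.2 w⟩)) i : ℚ)

namespace AffineData

variable {cs : CoxeterSystem M W} (D : AffineData cs)

/-- The set `J = S − {s₀}`. -/
def Jset : Set W := Set.range cs.simple \ {D.s0}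

/-- The finite Weyl group `W_J`. -/
def WJ : Subgroup W := Subgroup.closure D.Jset

/-- `λ ∈ Λ` is a dominant translation (`λ ∈ Λ⁺`). -/
def IsDominant (l : W) : Prop :=
  l ∈ D.Lam ∧ cs.length (l * D.wJ) = cs.length l + cs.length D.wJ

/-- The embedding `Λ → Λ_ℚ = ℚ^rank`. -/
def iota (l : D.Lam) : Fin D.rank → ℚ :=
  fun i => ((Multiplicative.toAdd (D.freeIso l)) i : ℚ)

/-- `e(A)`: the dimension of the `(−1)`-eigenspace of a linear endomorphism `A` of `Λ_ℚ`. -/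
def eNeg (f : (Fin D.rank → ℚ) →ₗ[ℚ] (Fin D.rank → ℚ)) : ℕ :=
  Module.finrank ℚ (Module.End.eigenspace (f : Module.End ℚ (Fin D.rank → ℚ)) (-1))

/-- The map `A_u : λ ↦ ᵘ(λ*) = −(ᵘʷᴶλ)` on `Λ_ℚ`, for `u ∈ W_J`. -/
def Amap (u : W) : (Fin D.rank → ℚ) →ₗ[ℚ] (Fin D.rank → ℚ) := - D.rho (u * D.wJ)

/-- The invariant `φ(w) = e(A_{w̄}) − e(A_e)` for `w ∈ I_*`. -/
def phi (w : W) : ℤ := (D.eNeg (D.Amap (D.pr w)) : ℤ) - (D.eNeg (D.Amap 1) : ℤ)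

/-- The double coset `W_J x W_J`. -/
def DCoset (x : W) : Set W := {y : W | ∃ u ∈ D.WJ, ∃ v ∈ D.WJ, y = u * x * v}

/-- The set `H = J ∩ bJb⁻¹`. -/
def Hset (b : W) : Set W := D.Jset ∩ ((fun s => b * s * b⁻¹) '' D.Jset)

/-- The set `H* ⊆ J`, image of `H` under `*`. -/
def Hstar (b : W) : Set W := (⇑D.st) '' D.Hset b

/-- The subgroup `W_{H*}` generated by `H*`. -/
def WHstar (b : W) : Subgroup W := Subgroup.closure (D.Hstar b)

/-- The reflection representation `R'` of `W_{H*}`, as a subspace of `Λ_ℚ`: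
the span of the vectors `λ − ˢλ` for `λ ∈ Λ`, `s ∈ H*`. -/
def Rprime (b : W) : Submodule ℚ (Fin D.rank → ℚ) :=
  Submodule.span ℚ
    {v : Fin D.rank → ℚ | ∃ l : D.Lam, ∃ s ∈ D.Hstar b,
      v = D.iota l - D.iota ⟨s * (l : W) * s⁻¹, D.hLam_normal.conj_mem _ l.2 s⟩}

/-- `e'(A)`: the dimension of the `(−1)`-eigenspace of an endomorphism `A` of `R'`. -/
def eNeg' {b : W} (f : ↥(D.Rprime b) →ₗ[ℚ] ↥(D.Rprime b)) : ℕ :=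
  Module.finrank ℚ (Module.End.eigenspace (f : Module.End ℚ ↥(D.Rprime b)) (-1))

/-- `φ'(z) = e'(B_z) − e'(B_e)`, where `B_u : x ↦ −u·(w_{H*}·x)` on `R'`; here
`rho'` is the conjugation action of `W_{H*}` on `R'` and `wHs` is the longest element
of `W_{H*}`. -/
def phiP {b : W} (rho' : W → (↥(D.Rprime b) →ₗ[ℚ] ↥(D.Rprime b))) (wHs z : W) : ℤ :=
  (D.eNeg' (-(rho' (z * wHs))) : ℤ) - (D.eNeg' (-(rho' wHs)) : ℤ)

/-- Membership in `A_Λ ⊆ A = Aut(W,S)`: automorphisms acting on `Λ` as conjugation by some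
element of `W_J`. -/
def InALam (a : MulAut W) : Prop :=
  IsDiagAut cs a ∧ ∃ w ∈ D.WJ, ∀ l ∈ D.Lam, a l = w * l * w⁻¹

/-- Membership in the coset `A_Λ* = {a ∘ * : a ∈ A_Λ}`. -/
def InALamStar (c : MulAut W) : Prop := ∃ a : MulAut W, D.InALam a ∧ c = a * D.st

/-- The double coset `W_J x W_J^◇`, where `W_J^◇` is the subgroup generated by
`J^◇ = S − {s₁}`. -/
def DCosetDia (s1 : W) (x : W) : Set W :=
  {y : W | ∃ u ∈ D.WJ, ∃ v ∈ Subgroup.closure (Set.range cs.simple \ {s1}), y = u * x * v}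


end AffineData

/-! ## The Hecke algebra, the Lusztig–Vogan module, and the polynomials `P`, `P^σ` -/

/-- The Hecke algebra of `(W,S)` over `ℚ(q)` (modelled on functions `W → ℚ(q)`, with basis
`TT w = T_w`), together with its bar involution, and the Kazhdan–Lusztig polynomials
`P_{y,w} ∈ ℤ[q]` characterized by their defining properties. -/
structure HeckeData (cs : CoxeterSystem M W) where
  /-- the involution `q ↦ q⁻¹` of `ℚ(q)` -/
  barK : K →+* K
  hbarK_X : barK qK = qK⁻¹
  hbarK_inv : ∀ x, barK (barK x) = x
  /-- the multiplication of the Hecke algebra -/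
  mulH : (W → K) →ₗ[K] (W → K) →ₗ[K] (W → K)
  hmul_assoc : ∀ x y z : W → K, mulH (mulH x y) z = mulH x (mulH y z)
  hmul_one : ∀ x : W → K, mulH (TT 1) x = x ∧ mulH x (TT 1) = x
  hmul_TT : ∀ u v : W, cs.length (u * v) = cs.length u + cs.length v →
    mulH (TT u) (TT v) = TT (u * v)
  hmul_Ts : ∀ s ∈ Set.range cs.simple,
    mulH (TT s) (TT s) = (qK - 1) • TT s + qK • TT (1 : W)
  /-- the bar involution of the Hecke algebra: the ring involution with `q ↦ q⁻¹`,
  `T_w ↦ (T_{w⁻¹})⁻¹` -/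
  barH : (W → K) →+ (W → K)
  hbarH_inv : ∀ x, barH (barH x) = x
  hbarH_smul : ∀ (c : K) (x : W → K), barH (c • x) = barK c • barH x
  hbarH_mul : ∀ x y : W → K, barH (mulH x y) = mulH (barH x) (barH y)
  hbarH_T : ∀ w : W, mulH (barH (TT w)) (TT w⁻¹) = TT (1 : W) ∧
    mulH (TT w⁻¹) (barH (TT w)) = TT (1 : W)
  /-- the Kazhdan–Lusztig polynomials `P_{y,w}` -/
  P : W → W → Polynomial ℤ
  hP_supp : ∀ y w : W, ¬ BruhatLE cs y w → P y w = 0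
  hP_diag : ∀ w : W, P w w = 1
  hP_deg : ∀ y w : W, BruhatLE cs y w → y ≠ w →
    2 * (P y w).natDegree + 1 ≤ cs.length w - cs.length y
  hP_dual : ∀ w : W,
    (qK ^ cs.length w) • barH (fun y => if BruhatLE cs y w then toK (P y w) else 0)
      = fun y => if BruhatLE cs y w then toK (P y w) else 0

/-- The Lusztig–Vogan module `M` over the Hecke algebra `H'` with parameter `q²`, attached to
a length-preserving involutive automorphism `star` of `(W,S)`, together with its bar
involution, and the polynomials `P^σ_{y,w} ∈ ℤ[q]` (for `y, w ∈ I_*`) characterized by their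
defining properties.  Both `H'` and `M` are modelled on functions `W → ℚ(q)`; the basis
element `a_w` of `M` (for `w ∈ I_*`) is `TT w`. -/
structure LVData (cs : CoxeterSystem M W) (star : MulAut W) where
  /-- the involution `q ↦ q⁻¹` of `ℚ(q)` -/
  barK : K →+* K
  hbarK_X : barK qK = qK⁻¹
  hbarK_inv : ∀ x, barK (barK x) = x
  /-- the multiplication of the Hecke algebra `H'` with parameter `q²` -/
  mulH' : (W → K) →ₗ[K] (W → K) →ₗ[K] (W → K)
  hmul'_assoc : ∀ x y z : W → K, mulH' (mulH' x y) z = mulH' x (mulH' y z)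
  hmul'_one : ∀ x : W → K, mulH' (TT 1) x = x ∧ mulH' x (TT 1) = x
  hmul'_TT : ∀ u v : W, cs.length (u * v) = cs.length u + cs.length v →
    mulH' (TT u) (TT v) = TT (u * v)
  hmul'_Ts : ∀ s ∈ Set.range cs.simple,
    mulH' (TT s) (TT s) = (qK ^ 2 - 1) • TT s + (qK ^ 2) • TT (1 : W)
  /-- the bar involution of `H'` -/
  barH' : (W → K) →+ (W → K)
  hbarH'_inv : ∀ x, barH' (barH' x) = x
  hbarH'_smul : ∀ (c : K) (x : W → K), barH' (c • x) = barK c • barH' x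
  hbarH'_mul : ∀ x y : W → K, barH' (mulH' x y) = mulH' (barH' x) (barH' y)
  hbarH'_T : ∀ w : W, mulH' (barH' (TT w)) (TT w⁻¹) = TT (1 : W) ∧
    mulH' (TT w⁻¹) (barH' (TT w)) = TT (1 : W)
  /-- the action of `H'` on the module `M` -/
  actM : (W → K) →ₗ[K] (W → K) →ₗ[K] (W → K)
  hact_one : ∀ m : W → K, actM (TT 1) m = m
  hact_mul : ∀ (h h' : W → K) (m : W → K), actM (mulH' h h') m = actM h (actM h' m)
  hact1 : ∀ s ∈ Set.range cs.simple, ∀ w : W, star w = w⁻¹ →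
    s * w = w * star s → cs.length w < cs.length (s * w) →
    actM (TT s) (TT w) = qK • TT w + (qK + 1) • TT (s * w)
  hact2 : ∀ s ∈ Set.range cs.simple, ∀ w : W, star w = w⁻¹ →
    s * w = w * star s → cs.length (s * w) < cs.length w →
    actM (TT s) (TT w) = (qK ^ 2 - qK - 1) • TT w + (qK ^ 2 - qK) • TT (s * w)
  hact3 : ∀ s ∈ Set.range cs.simple, ∀ w : W, star w = w⁻¹ →
    s * w ≠ w * star s → cs.length w < cs.length (s * w) →
    actM (TT s) (TT w) = TT (s * w * star s)
  hact4 : ∀ s ∈ Set.range cs.simple, ∀ w : W, star w = w⁻¹ →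
    s * w ≠ w * star s → cs.length (s * w) < cs.length w →
    actM (TT s) (TT w) = (qK ^ 2 - 1) • TT w + (qK ^ 2) • TT (s * w * star s)
  /-- the bar involution of the module `M` -/
  barM : (W → K) →+ (W → K)
  hbarM_inv : ∀ m : W → K, barM (barM m) = m
  hbarM_smul : ∀ (c : K) (m : W → K), barM (c • m) = barK c • barM m
  hbarM_act : ∀ (h m : W → K), barM (actM h m) = actM (barH' h) (barM m)
  hbarM_one : barM (TT 1) = TT (1 : W)
  /-- the Lusztig–Vogan polynomials `P^σ_{y,w}` -/
  Psig : W → W → Polynomial ℤ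
  hPsig_supp : ∀ y w : W, ¬ (BruhatLE cs y w ∧ star y = y⁻¹) → Psig y w = 0
  hPsig_diag : ∀ w : W, star w = w⁻¹ → Psig w w = 1
  hPsig_deg : ∀ y w : W, star w = w⁻¹ → star y = y⁻¹ → BruhatLE cs y w → y ≠ w →
    2 * (Psig y w).natDegree + 1 ≤ cs.length w - cs.length y
  hPsig_dual : ∀ w : W, star w = w⁻¹ →
    (qK ^ (2 * cs.length w)) •
        barM (fun y => if BruhatLE cs y w ∧ star y = y⁻¹ then toK (Psig y w) else 0)
      = fun y => if BruhatLE cs y w ∧ star y = y⁻¹ then toK (Psig y w) else 0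

/-! ## The `Z`-polynomials -/

/-- `Z_w(q) = Σ_{y ≤ w} P_{y,w}(q) q^{ℓ(y)}`. -/
def Zpoly (cs : CoxeterSystem M W) (HD : HeckeData cs) (w : W) : K :=
  ∑ᶠ y : W, if BruhatLE cs y w then toK (HD.P y w) * qK ^ cs.length y else 0

/-- `Z_w(−q) = Σ_{y ≤ w} P_{y,w}(−q) (−q)^{ℓ(y)}`. -/
def ZpolyNeg (cs : CoxeterSystem M W) (HD : HeckeData cs) (w : W) : K :=
  ∑ᶠ y : W, if BruhatLE cs y w then atNegQ (HD.P y w) * (-qK) ^ cs.length y else 0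

/-- `Z^σ_w(q) = Σ_{y ≤ w, y ∈ I_*} P^σ_{y,w}(q) q^{ℓ(y)} ((q−1)/(q+1))^{φ(y)}`. -/
def Zsig (cs : CoxeterSystem M W) (D : AffineData cs) (LD : LVData cs D.st) (w : W) : K :=
  ∑ᶠ y : W, if BruhatLE cs y w ∧ D.st y = y⁻¹ then
    toK (LD.Psig y w) * qK ^ cs.length y * ((qK - 1) / (qK + 1)) ^ D.phi y else 0

/-! ## Part 1 : Coxeter combinatorics -/
section P1
variable (cs : CoxeterSystem M W)

/-- the basic involution on `W × ZMod 2` -/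
def etaFun (i : B) (p : W × ZMod 2) : W × ZMod 2 :=
  (cs.simple i * p.1 * cs.simple i, p.2 + if p.1 = cs.simple i then 1 else 0)

theorem etaFun_invol (i : B) : Function.Involutive (etaFun cs i) := by
  intro p
  rcases p with ⟨t, e⟩
  have h1 : cs.simple i * (cs.simple i * t * cs.simple i) * cs.simple i = t := by
    simp [mul_assoc]
  have h2 : (cs.simple i * t * cs.simple i = cs.simple i) ↔ t = cs.simple i := by
    constructor
    · intro h
      have := congrArg (fun z => cs.simple i * z * cs.simple i) h
      simpa [mul_assoc] using this
    · rintro rfl; simp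
  unfold etaFun
  ext
  · exact h1
  · simp only [h2]
    rw [add_assoc]
    split_ifs
    · have : (1 : ZMod 2) + 1 = 0 := by decide
      simp [this]
    · simp

def eta (i : B) : Equiv.Perm (W × ZMod 2) := (etaFun_invol cs i).toPerm

theorem eta_apply (i : B) (t : W) (e : ZMod 2) :
    eta cs i (t, e) = (cs.simple i * t * cs.simple i, e + if t = cs.simple i then 1 else 0) := rfl

theorem simple_mul_rpow (i j : B) (k : ℕ) :
    cs.simple j * (cs.simple i * cs.simple j) ^ k
      = ((cs.simple i * cs.simple j) ^ k)⁻¹ * cs.simple j := by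
  induction k with
  | zero => simp
  | succ k ih =>
    have h0 : cs.simple j * (cs.simple i * cs.simple j)
        = (cs.simple i * cs.simple j)⁻¹ * cs.simple j := by simp [mul_assoc]
    calc cs.simple j * (cs.simple i * cs.simple j) ^ (k+1)
        = (cs.simple j * (cs.simple i * cs.simple j) ^ k) * (cs.simple i * cs.simple j) := by
          rw [pow_succ]; group
      _ = ((cs.simple i * cs.simple j) ^ k)⁻¹ * (cs.simple j * (cs.simple i * cs.simple j)) := by
          rw [ih]; simp [mul_assoc]
      _ = _ := by rw [h0, pow_succ']; simp [mul_assoc]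

theorem eta_pow (i j : B) (k : ℕ) (t : W) (e : ZMod 2) :
    ((eta cs i * eta cs j) ^ k) (t, e) =
      ((cs.simple i * cs.simple j) ^ k * t * ((cs.simple i * cs.simple j) ^ k)⁻¹,
       e + ∑ l ∈ Finset.range (2 * k),
        if t = ((cs.simple i * cs.simple j) ^ l)⁻¹ * cs.simple j then (1 : ZMod 2) else 0) := by
  induction k with
  | zero => simp
  | succ k ih =>
    rw [pow_succ', Equiv.Perm.mul_apply, ih, Equiv.Perm.mul_apply, eta_apply, eta_apply]
    set r := cs.simple i * cs.simple j with hr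
    have hk := simple_mul_rpow cs i j k
    rw [← hr] at hk
    have e1 : (r ^ k * t * (r ^ k)⁻¹ = cs.simple j) ↔ t = (r ^ (2 * k))⁻¹ * cs.simple j := by
      rw [mul_inv_eq_iff_eq_mul, hk, ← eq_inv_mul_iff_mul_eq]
      rw [two_mul, pow_add, mul_inv_rev, mul_assoc]
    have e2 : (cs.simple j * (r ^ k * t * (r ^ k)⁻¹) * cs.simple j = cs.simple i) ↔
        t = (r ^ (2 * k + 1))⁻¹ * cs.simple j := by
      have : cs.simple j * (r ^ k * t * (r ^ k)⁻¹) * cs.simple j = cs.simple i ↔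
          r ^ k * t * (r ^ k)⁻¹ = r⁻¹ * cs.simple j := by
        constructor
        · intro h
          have := congrArg (fun z => cs.simple j * z * cs.simple j) h
          simpa [mul_assoc, hr] using this
        · intro h
          rw [h]; simp [hr, mul_assoc]
      rw [this, mul_inv_eq_iff_eq_mul, mul_assoc, hk, ← eq_inv_mul_iff_mul_eq, two_mul, pow_succ',
        pow_add]
      have : (r * (r ^ k * r ^ k))⁻¹ * cs.simple j
          = (r ^ k)⁻¹ * (r⁻¹ * ((r ^ k)⁻¹ * cs.simple j)) := by
        generalize r = r
        group
      rw [this]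
    ext
    · simp only [pow_succ', hr]
      simp [mul_assoc]
    · simp only [e1, e2]
      rw [show 2 * (k + 1) = 2 * k + 1 + 1 by ring, Finset.sum_range_succ, Finset.sum_range_succ]
      ring

theorem eta_liftable : M.IsLiftable (eta cs) := by
  intro i j
  ext1 ⟨t, e⟩
  rw [eta_pow]
  have hm : (cs.simple i * cs.simple j) ^ (M i j) = 1 := by simp
  rw [hm, two_mul, Finset.sum_range_add]
  have : ∀ l, (cs.simple i * cs.simple j) ^ (M i j + l) = (cs.simple i * cs.simple j) ^ l := by
    intro l; rw [pow_add, hm, one_mul]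
  simp only [this]
  have h2 : ∀ z : ZMod 2, z + z = 0 := by decide
  rw [h2]; simp

def etaHom : W →* Equiv.Perm (W × ZMod 2) := cs.lift ⟨eta cs, eta_liftable cs⟩

theorem etaHom_simple (i : B) : etaHom cs (cs.simple i) = eta cs i :=
  cs.lift_apply_simple (eta_liftable cs) i

def nn (w t : W) : ZMod 2 := (etaHom cs w (t, 0)).2

theorem etaHom_apply (w : W) : ∀ (t : W) (e : ZMod 2),
    etaHom cs w (t, e) = (w * t * w⁻¹, e + nn cs w t) := by
  induction w using cs.simple_induction_left with
  | one => intro t e; simp [nn]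
  | mul_simple_left w i ih =>
    intro t e
    have key : ∀ e', etaHom cs (cs.simple i * w) (t, e') =
       (cs.simple i * (w * t * w⁻¹) * cs.simple i,
         e' + nn cs w t + if w * t * w⁻¹ = cs.simple i then 1 else 0) := by
      intro e'
      rw [map_mul, Equiv.Perm.mul_apply, ih, etaHom_simple, eta_apply]
    have h0 := key 0
    have hn : nn cs (cs.simple i * w) t = nn cs w t + if w * t * w⁻¹ = cs.simple i then 1 else 0 := by
      unfold nn
      rw [h0]; simp [nn]
    rw [key, hn]
    ext
    · simp [mul_assoc]
    · simp [add_assoc]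

theorem nn_mul (x y t : W) : nn cs (x * y) t = nn cs y t + nn cs x (y * t * y⁻¹) := by
  have : nn cs (x * y) t = (etaHom cs (x * y) (t, 0)).2 := rfl
  rw [this, map_mul, Equiv.Perm.mul_apply, etaHom_apply, etaHom_apply]
  simp

theorem nn_one (t : W) : nn cs 1 t = 0 := by simp [nn]

theorem nn_simple (i : B) (t : W) : nn cs (cs.simple i) t = if t = cs.simple i then 1 else 0 := by
  unfold nn
  rw [etaHom_simple, eta_apply]; simp

theorem nn_refl {t : W} (ht : cs.IsReflection t) : nn cs t t = 1 := by
  obtain ⟨u, i, rfl⟩ := ht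
  have h0 := nn_mul cs u u⁻¹ (u * cs.simple i * u⁻¹)
  rw [mul_inv_cancel, nn_one] at h0
  have e1 : u⁻¹ * (u * cs.simple i * u⁻¹) * u⁻¹⁻¹ = cs.simple i := by group
  rw [e1] at h0
  rw [nn_mul, nn_mul, e1, nn_simple]
  have e2 : cs.simple i * cs.simple i * (cs.simple i)⁻¹ = cs.simple i := by simp
  rw [e2]
  simp only [if_true]
  linear_combination -h0

theorem mem_ris_of_nn (ω : List B) (t : W) (h : nn cs (cs.wordProd ω) t ≠ 0) :
    t ∈ cs.rightInvSeq ω := by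
  induction ω with
  | nil => simp [nn_one] at h
  | cons i ω ih =>
    rw [CoxeterSystem.rightInvSeq, List.mem_cons]
    rw [cs.wordProd_cons, nn_mul, nn_simple] at h
    by_cases hc : cs.wordProd ω * t * (cs.wordProd ω)⁻¹ = cs.simple i
    · left; rw [← hc]; group
    · right; apply ih; simpa [hc] using h

theorem nn_eq_one_iff {w t : W} (ht : cs.IsReflection t) :
    nn cs w t = 1 ↔ cs.length (w * t) < cs.length w := by
  have fwd : ∀ w, nn cs w t = 1 → cs.length (w * t) < cs.length w := by
    intro w h
    obtain ⟨ω, hω, rfl⟩ := cs.exists_isReduced w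
    have := mem_ris_of_nn cs ω t (by rw [h]; decide)
    exact (cs.isRightInversion_of_mem_rightInvSeq hω this).2
  refine ⟨fwd w, fun h => ?_⟩
  by_contra hne
  have h01 : ∀ z : ZMod 2, z ≠ 1 → z = 0 := by decide
  have h0 := h01 _ hne
  have htt : t * t = 1 := ht.mul_self
  have e : t * t * t⁻¹ = t := by group
  have h1 := nn_mul cs (w * t) t t
  rw [e, mul_assoc, htt, mul_one, h0, nn_refl cs ht] at h1
  have h2 : nn cs (w * t) t = 1 := by
    have : ∀ z : ZMod 2, 0 = 1 + z → z = 1 := by decide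
    exact this _ h1
  have := fwd _ h2
  rw [mul_assoc, htt, mul_one] at this
  omega

/-- `t` is a left inversion of `w` -/
def LI (t w : W) : Prop := cs.length (t * w) < cs.length w

theorem LI_iff {t w : W} (ht : cs.IsReflection t) : LI cs t w ↔ nn cs w⁻¹ t = 1 := by
  rw [nn_eq_one_iff cs ht, LI]
  have : w⁻¹ * t = (t * w)⁻¹ := by rw [mul_inv_rev, ht.inv]
  rw [this, cs.length_inv, cs.length_inv]

theorem refl_conj {t : W} (ht : cs.IsReflection t) (w : W) : cs.IsReflection (w * t * w⁻¹) :=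
  ht.conj w

theorem refl_conj' {t : W} (ht : cs.IsReflection t) (w : W) : cs.IsReflection (w⁻¹ * t * w) := by
  simpa using ht.conj w⁻¹

theorem LI_mul {t : W} (ht : cs.IsReflection t) (x y : W) :
    LI cs t (x * y) ↔ ¬ (LI cs t x ↔ LI cs (x⁻¹ * t * x) y) := by
  rw [LI_iff cs ht, LI_iff cs ht, LI_iff cs (refl_conj' cs ht x), mul_inv_rev, nn_mul, inv_inv]
  generalize nn cs x⁻¹ t = a
  generalize nn cs y⁻¹ (x⁻¹ * t * x) = b
  revert a b
  decide

theorem not_LI_one {t : W} : ¬ LI cs t 1 := by simp [LI]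

theorem LI_self {t : W} (ht : cs.IsReflection t) : LI cs t t := by
  rw [LI_iff cs ht, ht.inv, nn_refl cs ht]

theorem LI_or {t : W} (ht : cs.IsReflection t) (w : W) : LI cs t (t * w) ↔ ¬ LI cs t w := by
  rw [LI_mul cs ht]
  have : t⁻¹ * t * t = t := by group
  rw [this]
  have := LI_self cs ht
  tauto

theorem not_LI_iff {t : W} (ht : cs.IsReflection t) (w : W) :
    ¬ LI cs t w ↔ cs.length w < cs.length (t * w) := by
  rw [← LI_or cs ht, LI, ← mul_assoc, ht.mul_self, one_mul]

theorem LI_simple {t s : W} (ht : cs.IsReflection t) (hs : s ∈ Set.range cs.simple) :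
    LI cs t s ↔ t = s := by
  obtain ⟨i, rfl⟩ := hs
  rw [LI_iff cs ht, cs.inv_simple, nn_simple]
  split_ifs with h <;> simp [h]

theorem refl_of_mem {s : W} (hs : s ∈ Set.range cs.simple) : cs.IsReflection s := by
  obtain ⟨i, rfl⟩ := hs
  exact cs.isReflection_simple i

theorem len_of_mem {s : W} (hs : s ∈ Set.range cs.simple) : cs.length s = 1 := by
  obtain ⟨i, rfl⟩ := hs
  exact cs.length_simple i

theorem len_LI {s w : W} (hs : s ∈ Set.range cs.simple) (h : LI cs s w) :
    cs.length w = cs.length (s * w) + 1 := by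
  obtain ⟨i, rfl⟩ := hs
  rcases cs.length_simple_mul w i with h' | h'
  · unfold LI at h; omega
  · omega

theorem len_not_LI {s w : W} (hs : s ∈ Set.range cs.simple) (h : ¬ LI cs s w) :
    cs.length (s * w) = cs.length w + 1 := by
  obtain ⟨i, rfl⟩ := hs
  rcases cs.length_simple_mul w i with h' | h'
  · exact h'
  · unfold LI at h; omega

/-- set of left inversions -/
def NN (w : W) : Set W := {t | cs.IsReflection t ∧ LI cs t w}

theorem NN_eq {ω : List B} (hω : cs.IsReduced ω) :
    NN cs (cs.wordProd ω) = {t | t ∈ cs.leftInvSeq ω} := by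
  ext t
  constructor
  · rintro ⟨ht, h⟩
    rw [LI_iff cs ht] at h
    have : (cs.wordProd ω)⁻¹ = cs.wordProd ω.reverse := by rw [cs.wordProd_reverse]
    rw [this] at h
    have h2 := mem_ris_of_nn cs _ t (by rw [h]; decide)
    rw [cs.rightInvSeq_reverse] at h2
    simpa using h2
  · intro h
    exact cs.isLeftInversion_of_mem_leftInvSeq hω h

theorem NN_finite (w : W) : (NN cs w).Finite := by
  obtain ⟨ω, hω, rfl⟩ := cs.exists_isReduced w
  rw [NN_eq cs hω]
  exact List.finite_toSet _

theorem NN_ncard (w : W) : (NN cs w).ncard = cs.length w := by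
  obtain ⟨ω, hω, rfl⟩ := cs.exists_isReduced w
  rw [NN_eq cs hω]
  have : {t | t ∈ cs.leftInvSeq ω} = ((cs.leftInvSeq ω).toFinset : Set W) := by ext; simp
  rw [this, Set.ncard_coe_finset, List.toFinset_card_of_nodup hω.nodup_leftInvSeq,
    cs.length_leftInvSeq, hω]

/-! ### Parabolic subgroups -/

variable {I : Set W}

theorem exists_redword (hI : I ⊆ Set.range cs.simple) {u : W} (hu : u ∈ Subgroup.closure I) :
    ∃ ω : List B, (∀ i ∈ ω, cs.simple i ∈ I) ∧ cs.IsReduced ω ∧ cs.wordProd ω = u := by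
  have main : ∀ x ∈ I, ∀ ω : List B, (∀ i ∈ ω, cs.simple i ∈ I) → cs.IsReduced ω →
      ∃ ω' : List B, (∀ i ∈ ω', cs.simple i ∈ I) ∧ cs.IsReduced ω' ∧
        cs.wordProd ω' = x * cs.wordProd ω := by
    intro x hx ω h1 h2
    by_cases hL : LI cs x (cs.wordProd ω)
    · have hxS := hI hx
      have : x ∈ cs.leftInvSeq ω := by
        have : x ∈ NN cs (cs.wordProd ω) := ⟨refl_of_mem cs hxS, hL⟩
        rw [NN_eq cs h2] at this
        exact this
      obtain ⟨j, hj, hjx⟩ := List.getElem_of_mem this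
      have hh := cs.getD_leftInvSeq_mul_wordProd ω j
      rw [List.getD_eq_getElem _ _ hj, hjx] at hh
      refine ⟨ω.eraseIdx j, fun i hi => h1 i (List.mem_of_mem_eraseIdx hi), ?_, hh.symm⟩
      unfold CoxeterSystem.IsReduced
      rw [← hh]
      have h3 := len_LI cs hxS hL
      have h4 : cs.length (cs.wordProd ω) = ω.length := h2
      rw [cs.length_leftInvSeq] at hj
      rw [List.length_eraseIdx_of_lt hj]
      omega
    · obtain ⟨i, rfl⟩ := hI hx
      refine ⟨i :: ω, ?_, ?_, cs.wordProd_cons i ω⟩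
      · intro k hk
        rcases List.mem_cons.1 hk with rfl | hk
        · exact hx
        · exact h1 k hk
      · unfold CoxeterSystem.IsReduced
        rw [cs.wordProd_cons, len_not_LI cs ⟨i, rfl⟩ hL, List.length_cons]
        have h4 : cs.length (cs.wordProd ω) = ω.length := h2
        omega
  induction hu using Subgroup.closure_induction_left with
  | one => exact ⟨[], by simp, by simp [CoxeterSystem.IsReduced], by simp⟩
  | mul_left x hx y hy ih =>
    obtain ⟨ω, h1, h2, rfl⟩ := ih
    exact main x hx ω h1 h2
  | inv_mul_cancel x hx y hy ih =>
    obtain ⟨ω, h1, h2, rfl⟩ := ih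
    rw [(refl_of_mem cs (hI hx)).inv]
    exact main x hx ω h1 h2

theorem wordProd_mem {ω : List B} (h : ∀ i ∈ ω, cs.simple i ∈ I) :
    cs.wordProd ω ∈ Subgroup.closure I := by
  induction ω with
  | nil => simp
  | cons i ω ih =>
    rw [cs.wordProd_cons]
    exact Subgroup.mul_mem _ (Subgroup.subset_closure (h i (by simp)))
      (ih (fun k hk => h k (by simp [hk])))

theorem mem_of_LI (hI : I ⊆ Set.range cs.simple) {u t : W} (hu : u ∈ Subgroup.closure I)
    (ht : cs.IsReflection t) (h : LI cs t u) : t ∈ Subgroup.closure I := by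
  obtain ⟨ω, h1, h2, rfl⟩ := exists_redword cs hI hu
  have : t ∈ NN cs (cs.wordProd ω) := ⟨ht, h⟩
  rw [NN_eq cs h2] at this
  obtain ⟨j, hj, hjx⟩ := List.getElem_of_mem this
  have hh := cs.getD_leftInvSeq_mul_wordProd ω j
  rw [List.getD_eq_getElem _ _ hj, hjx] at hh
  have h3 : cs.wordProd (ω.eraseIdx j) ∈ Subgroup.closure I :=
    wordProd_mem cs (fun i hi => h1 i (List.mem_of_mem_eraseIdx hi))
  rw [← hh] at h3
  exact (Subgroup.mul_mem_cancel_right _ hu).1 h3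

theorem exists_descent (hI : I ⊆ Set.range cs.simple) {u : W} (hu : u ∈ Subgroup.closure I)
    (h1 : u ≠ 1) : ∃ s ∈ I, LI cs s u := by
  obtain ⟨ω, h2, h3, rfl⟩ := exists_redword cs hI hu
  cases ω with
  | nil => simp at h1
  | cons i ω =>
    refine ⟨cs.simple i, h2 i (by simp), ?_⟩
    unfold LI
    rw [cs.wordProd_cons, cs.simple_mul_simple_cancel_left]
    have : cs.length (cs.wordProd (i :: ω)) = (i::ω).length := h3
    rw [cs.wordProd_cons] at this
    have h4 := cs.length_wordProd_le ω
    simp at this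
    omega

theorem mem_of_len_one (hI : I ⊆ Set.range cs.simple) {u : W} (hu : u ∈ Subgroup.closure I)
    (h1 : cs.length u = 1) : u ∈ I := by
  have hne : u ≠ 1 := by rintro rfl; simp at h1
  obtain ⟨s, hs, h⟩ := exists_descent cs hI hu hne
  have := len_LI cs (hI hs) h
  rw [h1] at this
  have h0 : s * u = 1 := by
    rw [← cs.length_eq_zero_iff]; omega
  have : u = s := by
    have h3 := (refl_of_mem cs (hI hs)).inv
    rw [← h3]; exact (eq_inv_of_mul_eq_one_right h0)
  rw [this]; exact hs

/-- left minimal -/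
def LMin (I : Set W) (x : W) : Prop := ∀ s ∈ I, ¬ LI cs s x

theorem len_mul_of_noLI (hI : I ⊆ Set.range cs.simple) {x : W}
    (hx : ∀ t ∈ Subgroup.closure I, cs.IsReflection t → ¬ LI cs t x) :
    ∀ u ∈ Subgroup.closure I, cs.length (u * x) = cs.length u + cs.length x := by
  have : ∀ n, ∀ u ∈ Subgroup.closure I, cs.length u = n →
      cs.length (u * x) = cs.length u + cs.length x := by
    intro n
    induction n with
    | zero => intro u hu h; rw [cs.length_eq_zero_iff] at h; subst h; simp
    | succ n ih =>
      intro u hu hn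
      have hne : u ≠ 1 := by rintro rfl; simp at hn
      obtain ⟨s, hs, h⟩ := exists_descent cs hI hu hne
      have hr := refl_of_mem cs (hI hs)
      have h2 := len_LI cs (hI hs) h
      have hsu : s * u ∈ Subgroup.closure I :=
        Subgroup.mul_mem _ (Subgroup.subset_closure hs) hu
      have h3 := ih (s * u) hsu (by omega)
      have h4 : LI cs s (u * x) := by
        rw [LI_mul cs hr]
        refine fun hc => hx _ ?_ (refl_conj' cs hr u) (hc.1 h)
        exact Subgroup.mul_mem _ (Subgroup.mul_mem _ (Subgroup.inv_mem _ hu)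
          (Subgroup.subset_closure hs)) hu
      have h5 := len_LI cs (hI hs) h4
      rw [← mul_assoc] at h5
      omega
  intro u hu
  exact this _ u hu rfl

theorem exists_min (I : Set W) (x : W) : ∃ u ∈ Subgroup.closure I, ∃ y, x = u * y ∧
    ∀ v ∈ Subgroup.closure I, cs.length y ≤ cs.length (v * y) := by
  have hne : ∃ n, ∃ v ∈ Subgroup.closure I, cs.length (v * x) = n := ⟨_, 1, Subgroup.one_mem _, rfl⟩
  obtain ⟨v, hv, hvn⟩ := Nat.find_spec hne
  refine ⟨v⁻¹, Subgroup.inv_mem _ hv, v * x, by group, ?_⟩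
  intro w hw
  rw [hvn]
  apply Nat.find_min'
  exact ⟨w * v, Subgroup.mul_mem _ hw hv, by rw [mul_assoc]⟩

theorem noLI_of_min {y : W}
    (h : ∀ v ∈ Subgroup.closure I, cs.length y ≤ cs.length (v * y)) :
    ∀ t ∈ Subgroup.closure I, cs.IsReflection t → ¬ LI cs t y := by
  intro t ht _ hL
  have := h t ht
  unfold LI at hL; omega

theorem LMin.noLI (hI : I ⊆ Set.range cs.simple) {x : W} (hx : LMin cs I x) :
    ∀ t ∈ Subgroup.closure I, cs.IsReflection t → ¬ LI cs t x := by
  obtain ⟨u, hu, y, rfl, hy⟩ := exists_min cs I x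
  have hy' := noLI_of_min cs hy
  have hl := len_mul_of_noLI cs hI hy'
  have : u = 1 := by
    by_contra hne
    obtain ⟨s, hs, h⟩ := exists_descent cs hI hu hne
    apply hx s hs
    unfold LI at h ⊢
    rw [← mul_assoc, hl u hu, hl _ (Subgroup.mul_mem _ (Subgroup.subset_closure hs) hu)]
    omega
  subst this
  simpa using hy'

theorem LMin.len (hI : I ⊆ Set.range cs.simple) {x : W} (hx : LMin cs I x)
    {u : W} (hu : u ∈ Subgroup.closure I) :
    cs.length (u * x) = cs.length u + cs.length x :=
  len_mul_of_noLI cs hI (LMin.noLI cs hI hx) u hu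

theorem exists_LMin (hI : I ⊆ Set.range cs.simple) (x : W) :
    ∃ u ∈ Subgroup.closure I, ∃ y, x = u * y ∧ LMin cs I y := by
  obtain ⟨u, hu, y, rfl, hy⟩ := exists_min cs I x
  exact ⟨u, hu, y, rfl, fun s hs => noLI_of_min cs hy s (Subgroup.subset_closure hs)
    (refl_of_mem cs (hI hs))⟩

theorem LMin.LI_mul_iff (hI : I ⊆ Set.range cs.simple) {y : W} (hy : LMin cs I y)
    {u t : W} (hu : u ∈ Subgroup.closure I) (ht : t ∈ Subgroup.closure I)
    (hr : cs.IsReflection t) : LI cs t (u * y) ↔ LI cs t u := by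
  rw [LI_mul cs hr]
  have : ¬ LI cs (u⁻¹ * t * u) y := LMin.noLI cs hI hy _
    (Subgroup.mul_mem _ (Subgroup.mul_mem _ (Subgroup.inv_mem _ hu) ht) hu) (refl_conj' cs hr u)
  tauto

/-- uniqueness of the minimal coset decomposition -/
theorem LMin.unique (hI : I ⊆ Set.range cs.simple) {y y' u : W} (hy : LMin cs I y)
    (hy' : LMin cs I y') (hu : u ∈ Subgroup.closure I) (h : y' = u * y) : u = 1 := by
  have h1 := LMin.len cs hI hy hu
  have h2 := LMin.len cs hI hy' (Subgroup.inv_mem _ hu)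
  rw [cs.length_inv] at h2
  have : u⁻¹ * y' = y := by rw [h]; group
  rw [this] at h2
  rw [← h] at h1
  rw [← cs.length_eq_zero_iff]; omega

/-- `v` is the longest element of `W_I`, in terms of inversions. -/
def IsTop (I : Set W) (v : W) : Prop :=
  v ∈ Subgroup.closure I ∧ ∀ t ∈ Subgroup.closure I, cs.IsReflection t → LI cs t v

theorem isTop_of_max {v : W} (hv : v ∈ Subgroup.closure I)
    (hmax : ∀ x ∈ Subgroup.closure I, cs.length x ≤ cs.length v) : IsTop cs I v := by
  refine ⟨hv, fun t ht hr => ?_⟩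
  by_contra hc
  rw [not_LI_iff cs hr] at hc
  have := hmax _ (Subgroup.mul_mem _ ht hv)
  omega

theorem exists_isTop (hfin : (Subgroup.closure I : Set W).Finite) : ∃ v, IsTop cs I v := by
  obtain ⟨v, hv, hmax⟩ := Set.exists_max_image _ cs.length hfin ⟨1, Subgroup.one_mem _⟩
  exact ⟨v, isTop_of_max cs hv hmax⟩

theorem conj_mem' {u t : W} (hu : u ∈ Subgroup.closure I) (ht : t ∈ Subgroup.closure I) :
    u⁻¹ * t * u ∈ Subgroup.closure I :=
  Subgroup.mul_mem _ (Subgroup.mul_mem _ (Subgroup.inv_mem _ hu) ht) hu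

theorem conj_mem'' {u t : W} (hu : u ∈ Subgroup.closure I) (ht : t ∈ Subgroup.closure I) :
    u * t * u⁻¹ ∈ Subgroup.closure I :=
  Subgroup.mul_mem _ (Subgroup.mul_mem _ hu ht) (Subgroup.inv_mem _ hu)

/-- left multiplication by the top element complements inversions -/
theorem IsTop.LI_mul {v : W} (hv : IsTop cs I v) {t : W} (ht : t ∈ Subgroup.closure I)
    (hr : cs.IsReflection t) (y : W) :
    LI cs t (v * y) ↔ ¬ LI cs (v⁻¹ * t * v) y := by
  rw [LY.LI_mul cs hr]
  have := hv.2 t ht hr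
  tauto

theorem eq_one_of_noLI (hI : I ⊆ Set.range cs.simple) {y : W} (hy : y ∈ Subgroup.closure I)
    (h : LMin cs I y) : y = 1 := by
  by_contra hne
  obtain ⟨s, hs, h'⟩ := exists_descent cs hI hy hne
  exact h s hs h'

theorem IsTop.unique (hI : I ⊆ Set.range cs.simple) {v v' : W} (hv : IsTop cs I v)
    (hv' : IsTop cs I v') : v = v' := by
  have : v⁻¹ * v' = 1 := by
    apply eq_one_of_noLI cs hI (Subgroup.mul_mem _ (Subgroup.inv_mem _ hv.1) hv'.1)
    intro s hs
    have hr := refl_of_mem cs (hI hs)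
    have h1 := hv.LI_mul cs (conj_mem'' hv.1 (Subgroup.subset_closure hs))
      (refl_conj cs hr v) (v⁻¹ * v')
    have e : v⁻¹ * (v * s * v⁻¹) * v = s := by group
    rw [e, mul_inv_cancel_left] at h1
    exact h1.1 (hv'.2 _ (conj_mem'' hv.1 (Subgroup.subset_closure hs)) (refl_conj cs hr v))
  exact (inv_mul_eq_one.1 this)

theorem IsTop.ncard {v : W} (hI : I ⊆ Set.range cs.simple) (hv : IsTop cs I v) :
    {t | t ∈ Subgroup.closure I ∧ cs.IsReflection t}.ncard = cs.length v := by
  rw [← NN_ncard]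
  congr 1
  ext t
  exact ⟨fun h => ⟨h.2, hv.2 t h.1 h.2⟩, fun h => ⟨mem_of_LI cs hI hv.1 h.1 h.2, h.1⟩⟩

theorem IsTop.le {v : W} (hI : I ⊆ Set.range cs.simple) (hv : IsTop cs I v)
    {x : W} (hx : x ∈ Subgroup.closure I) : cs.length x ≤ cs.length v := by
  rw [← NN_ncard, ← NN_ncard]
  apply Set.ncard_le_ncard _ (NN_finite cs v)
  intro t ht
  exact ⟨ht.1, hv.2 t (mem_of_LI cs hI hx ht.1 ht.2) ht.1⟩

theorem IsTop.inv_eq (hI : I ⊆ Set.range cs.simple) {v : W} (hv : IsTop cs I v) : v⁻¹ = v := by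
  refine IsTop.unique cs hI (isTop_of_max cs (Subgroup.inv_mem _ hv.1) ?_) hv
  intro x hx
  rw [cs.length_inv]
  exact hv.le cs hI hx

theorem IsTop.mul_self (hI : I ⊆ Set.range cs.simple) {v : W} (hv : IsTop cs I v) :
    v * v = 1 := by
  nth_rewrite 1 [← hv.inv_eq cs hI]; simp

theorem IsTop.conj_simple (hI : I ⊆ Set.range cs.simple) {v : W} (hv : IsTop cs I v) {s : W}
    (hs : s ∈ I) : v * s * v⁻¹ ∈ I := by
  have hsW := Subgroup.subset_closure (k := I) hs
  have hr := refl_of_mem cs (hI hs)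
  apply mem_of_len_one cs hI (conj_mem'' hv.1 hsW)
  rw [← NN_ncard, Set.ncard_eq_one]
  refine ⟨v * s * v⁻¹, ?_⟩
  ext t
  constructor
  · rintro ⟨ht, hL⟩
    have htW := mem_of_LI cs hI (conj_mem'' hv.1 hsW) ht hL
    rw [hv.inv_eq cs hI, mul_assoc, hv.LI_mul cs htW ht, LY.LI_mul cs (refl_conj' cs ht v)] at hL
    have h1 : LI cs (s⁻¹ * (v⁻¹ * t * v) * s) v :=
      hv.2 _ (conj_mem' hsW (conj_mem' hv.1 htW)) (refl_conj' cs (refl_conj' cs ht v) s)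
    have h2 : LI cs (v⁻¹ * t * v) s := by
      tauto
    rw [LI_simple cs (refl_conj' cs ht v) (hI hs)] at h2
    rw [Set.mem_singleton_iff, ← h2]; group
  · rintro rfl
    exact ⟨refl_conj cs hr v, LI_self cs (refl_conj cs hr v)⟩

/-- if `u ∈ W_I` has all of `I` as left descents, then it is the longest element. -/
theorem IsTop.eq_of_descents (hI : I ⊆ Set.range cs.simple) {u v : W} (hv : IsTop cs I v)
    (hu : u ∈ Subgroup.closure I) (h : ∀ s ∈ I, LI cs s u) : u = v := by
  have : v⁻¹ * u = 1 := by
    apply eq_one_of_noLI cs hI (Subgroup.mul_mem _ (Subgroup.inv_mem _ hv.1) hu)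
    intro s hs
    have hs' := hv.conj_simple cs hI hs
    have hr := refl_of_mem cs (hI hs)
    have h1 := hv.LI_mul cs (conj_mem'' hv.1 (Subgroup.subset_closure hs))
      (refl_conj cs hr v) (v⁻¹ * u)
    have e : v⁻¹ * (v * s * v⁻¹) * v = s := by group
    rw [e, mul_inv_cancel_left] at h1
    exact h1.1 (h _ hs')
  exact (inv_mul_eq_one.1 this).symm

/-- right minimal -/
def RMin (K : Set W) (x : W) : Prop := LMin cs K x⁻¹

/-- Deodhar's lemma -/
theorem deodhar {K : Set W} (hK : K ⊆ Set.range cs.simple) {x s : W} (hx : RMin cs K x)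
    (hs : s ∈ Set.range cs.simple) : RMin cs K (s * x) ∨ ∃ s' ∈ K, s * x = x * s' := by
  by_cases h : RMin cs K (s * x)
  · exact Or.inl h
  right
  unfold RMin LMin at h
  push Not at h
  obtain ⟨s', hs', h⟩ := h
  have hr' := refl_of_mem cs (hK hs')
  have hr := refl_of_mem cs hs
  rw [mul_inv_rev, LI_mul cs hr', hr.inv, inv_inv] at h
  have h0 := hx s' hs'
  have h1 : LI cs (x * s' * x⁻¹) s := by tauto
  rw [LI_simple cs (refl_conj cs hr' x) hs] at h1
  exact ⟨s', hs', by rw [← h1]; group⟩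

end P1


/-! ## Part 2 : the projection of `b` -/
section P2
variable {cs : CoxeterSystem M W} (D : AffineData cs)

theorem Jset_sub : D.Jset ⊆ Set.range cs.simple := Set.sdiff_subset

theorem isTop_wJ : IsTop cs D.Jset D.wJ := isTop_of_max cs D.hwJ_mem D.hwJ_max

theorem WJ_finite : (Subgroup.closure D.Jset : Set W).Finite := D.hWJ_fin

theorem st_len_le (w : W) : cs.length (D.st w) ≤ cs.length w := by
  obtain ⟨ω, hω, rfl⟩ := cs.exists_isReduced w
  have h1 : cs.length (cs.wordProd ω) = ω.length := hω
  rw [h1]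
  clear h1 hω
  induction ω with
  | nil => simp
  | cons i ω ih =>
    rw [cs.wordProd_cons, map_mul]
    have h1 := cs.length_mul_le (D.st (cs.simple i)) (D.st (cs.wordProd ω))
    have h2 := len_of_mem cs (D.hst_S _ ⟨i, rfl⟩)
    simp only [List.length_cons]
    omega

theorem st_len (w : W) : cs.length (D.st w) = cs.length w := by
  apply le_antisymm (st_len_le D w)
  have := st_len_le D (D.st w)
  rwa [D.hst_inv] at this

theorem st_J {s : W} (hs : s ∈ D.Jset) : D.st s ∈ D.Jset := by
  have h := (isTop_wJ D).conj_simple cs (Jset_sub D) hs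
  rw [(isTop_wJ D).inv_eq cs (Jset_sub D)] at h
  rw [D.hst_J s (Subgroup.subset_closure hs)]
  exact h

theorem deodhar_word {I K : Set W} (hI : I ⊆ Set.range cs.simple) (hK : K ⊆ Set.range cs.simple)
    {b : W} (hb : RMin cs K b) {u : W} (hu : u ∈ Subgroup.closure I) :
    ∃ u' ∈ Subgroup.closure I, ∃ v ∈ Subgroup.closure K,
      u * b = u' * b * v ∧ RMin cs K (u' * b) := by
  have step : ∀ x ∈ I, ∀ y, (∃ u' ∈ Subgroup.closure I, ∃ v ∈ Subgroup.closure K,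
      y * b = u' * b * v ∧ RMin cs K (u' * b)) → (∃ u' ∈ Subgroup.closure I,
      ∃ v ∈ Subgroup.closure K, (x * y) * b = u' * b * v ∧ RMin cs K (u' * b)) := by
    rintro x hx y ⟨u', hu', v, hv, h1, h2⟩
    rcases deodhar cs hK h2 (hI hx) with h | ⟨s', hs', h⟩
    · refine ⟨x * u', Subgroup.mul_mem _ (Subgroup.subset_closure hx) hu', v, hv, ?_, ?_⟩
      · rw [mul_assoc, h1]; simp only [mul_assoc]
      · rwa [mul_assoc]
    · refine ⟨u', hu', s' * v, Subgroup.mul_mem _ (Subgroup.subset_closure hs') hv, ?_, h2⟩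
      rw [mul_assoc, h1, ← mul_assoc, h]; simp only [mul_assoc]
  induction hu using Subgroup.closure_induction_left with
  | one => exact ⟨1, Subgroup.one_mem _, 1, Subgroup.one_mem _, by simp, by simpa using hb⟩
  | mul_left x hx y hy ih => exact step x hx y ih
  | inv_mul_cancel x hx y hy ih =>
    rw [(refl_of_mem cs (hI hx)).inv]
    exact step x hx y ih

theorem RMin.len {K : Set W} (hK : K ⊆ Set.range cs.simple) {x v : W} (hx : RMin cs K x)
    (hv : v ∈ Subgroup.closure K) : cs.length (x * v) = cs.length x + cs.length v := by
  have := LMin.len cs hK hx (Subgroup.inv_mem _ hv)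
  rw [← mul_inv_rev, cs.length_inv, cs.length_inv, cs.length_inv] at this
  omega

theorem RMin.unique {K : Set W} (hK : K ⊆ Set.range cs.simple) {x y v : W} (hx : RMin cs K x)
    (hy : RMin cs K y) (hv : v ∈ Subgroup.closure K) (h : y = x * v) : v = 1 := by
  have := LMin.unique cs hK hx hy (Subgroup.inv_mem _ hv) (by rw [h, mul_inv_rev])
  simpa using this

theorem dominant_RMin {mu : W} (hmu : D.IsDominant mu) : RMin cs D.Jset mu := by
  obtain ⟨u, hu, y, h, hy⟩ := exists_LMin cs (Jset_sub D) mu⁻¹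
  have h1 := hmu.2
  have h2 : mu * D.wJ = (D.wJ⁻¹ * u * y)⁻¹ := by
    rw [mul_assoc, ← h]; group
  have h3 : cs.length mu = cs.length u + cs.length y := by
    rw [← cs.length_inv, h]; exact LMin.len cs (Jset_sub D) hy hu
  have hm := Subgroup.mul_mem _ (Subgroup.inv_mem _ (isTop_wJ D).1) hu
  rw [h2, cs.length_inv, LMin.len cs (Jset_sub D) hy hm, h3] at h1
  have h4 := (isTop_wJ D).le cs (Jset_sub D) hm
  have h5 : u = 1 := by rw [← cs.length_eq_zero_iff]; omega
  subst h5
  unfold RMin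
  rw [h]; simpa using hy

theorem dominant_descents {mu : W} (hmu : D.IsDominant mu) : ∀ s ∈ D.Jset, LI cs s (mu * D.wJ) := by
  intro s hs
  have hT := isTop_wJ D
  have hJ := Jset_sub D
  have hi := hT.inv_eq cs hJ
  have hst : D.st (mu * D.wJ) = (mu * D.wJ)⁻¹ := by
    rw [map_mul, D.hst_J _ hT.1, D.hst_Lam _ hmu.1, hT.mul_self cs hJ]
    simp [hi, mul_assoc]
    exact hT.mul_self cs hJ
  have h1 : LI cs (D.st s) (mu * D.wJ)⁻¹ := by
    rw [mul_inv_rev, hi]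
    have hs' := st_J D hs
    rw [LMin.LI_mul_iff cs hJ (dominant_RMin D hmu) hT.1 (Subgroup.subset_closure hs')
      (refl_of_mem cs (hJ hs'))]
    exact hT.2 _ (Subgroup.subset_closure hs') (refl_of_mem cs (hJ hs'))
  unfold LI at h1 ⊢
  rw [← hst, ← map_mul, st_len, st_len] at h1
  exact h1

theorem Hset_sub (b : W) : D.Hset b ⊆ D.Jset := Set.inter_subset_left

theorem pr_b {mu b : W} (hmu : D.IsDominant mu) (hb_mem : b ∈ D.DCoset mu)
    (hb_min : ∀ y ∈ D.DCoset mu, cs.length b ≤ cs.length y) :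
    ∃ wH, IsTop cs (D.Hset b) wH ∧ D.pr b = wH * D.wJ := by
  have hT := isTop_wJ D
  have hJ := Jset_sub D
  have hH := (Hset_sub D b).trans hJ
  have hHle : Subgroup.closure (D.Hset b) ≤ Subgroup.closure D.Jset :=
    Subgroup.closure_mono (Hset_sub D b)
  obtain ⟨wH, hwH⟩ := exists_isTop cs ((WJ_finite D).subset hHle)
  refine ⟨wH, hwH, ?_⟩
  obtain ⟨u0, hu0, v0, hv0, hb⟩ := hb_mem
  have hbL : LMin cs D.Jset b := by
    intro s hs hL
    have := hb_min (s * b) ⟨s * u0, Subgroup.mul_mem _ (Subgroup.subset_closure hs) hu0, v0, hv0,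
      by rw [hb]; simp only [mul_assoc]⟩
    unfold LI at hL; omega
  have hbR : RMin cs D.Jset b := by
    intro s hs hL
    have := hb_min (b * s) ⟨u0, hu0, v0 * s, Subgroup.mul_mem _ hv0 (Subgroup.subset_closure hs),
      by rw [hb]; simp only [mul_assoc]⟩
    unfold LI at hL
    have e : s * b⁻¹ = (b * s)⁻¹ := by rw [mul_inv_rev, (refl_of_mem cs (hJ hs)).inv]
    rw [e, cs.length_inv, cs.length_inv] at hL; omega
  have hmR := dominant_RMin D hmu
  -- μ = u' b
  obtain ⟨u', hu', hmub⟩ : ∃ u' ∈ Subgroup.closure D.Jset, mu = u' * b := by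
    obtain ⟨u', hu', v, hv, h1, h2⟩ := deodhar_word hJ hJ hbR (Subgroup.inv_mem _ hu0)
    have h3 : mu = u' * b * (v * v0⁻¹) := by
      rw [← mul_assoc, ← h1, hb]; group
    have h4 := RMin.unique hJ h2 hmR (Subgroup.mul_mem _ hv (Subgroup.inv_mem _ hv0)) h3
    exact ⟨u', hu', by rw [h3, h4, mul_one]⟩
  have hdesc := dominant_descents D hmu
  have hlen_u : ∀ u ∈ Subgroup.closure D.Jset, cs.length (u * b) = cs.length u + cs.length b :=
    fun u hu => LMin.len cs hJ hbL hu
  -- right H-minimality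
  have hHmin : RMin cs (D.Hset b) u' := by
    intro h hh hL
    obtain ⟨hhJ, s', hs', rfl⟩ := hh
    unfold LI at hL
    simp only at hL hhJ
    have hr := refl_of_mem cs (hJ hhJ)
    have e : b * s' * b⁻¹ * u'⁻¹ = (u' * (b * s' * b⁻¹))⁻¹ := by
      rw [mul_inv_rev, hr.inv]
    rw [e, cs.length_inv, cs.length_inv] at hL
    have h1 := hlen_u _ (Subgroup.mul_mem _ hu' (Subgroup.subset_closure hhJ))
    have h2 : u' * (b * s' * b⁻¹) * b = mu * s' := by rw [hmub]; group
    have h3 := RMin.len hJ hmR (Subgroup.subset_closure hs')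
    rw [h2, h3, hmub, hlen_u _ hu', len_of_mem cs (hJ hs')] at h1
    omega
  have key : u' * wH = D.wJ := by
    apply hT.eq_of_descents cs hJ (Subgroup.mul_mem _ hu' (hHle hwH.1))
    intro s hs
    have hr := refl_of_mem cs (hJ hs)
    rw [LI_mul cs hr]
    rcases deodhar cs hJ hmR (hJ hs) with h | ⟨s', hs', h⟩
    · have h1 : LI cs s mu := by
        have h2 := hdesc s hs
        unfold LI at h2 ⊢
        rw [← mul_assoc, RMin.len hJ h hT.1, RMin.len hJ hmR hT.1] at h2
        omega
      have h2 : LI cs s u' := by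
        rw [hmub, LMin.LI_mul_iff cs hJ hbL hu' (Subgroup.subset_closure hs) hr] at h1
        exact h1
      intro hc
      have h3 := hc.1 h2
      have h4 := mem_of_LI cs hH hwH.1 (refl_conj' cs hr u') h3
      have h5 := RMin.len hH hHmin h4
      have e : u' * (u'⁻¹ * s * u') = s * u' := by group
      rw [e] at h5
      unfold LI at h2; omega
    · have e0 : u'⁻¹ * s * u' = b * s' * b⁻¹ := by
        rw [hmub] at h
        have : s = u' * b * s' * (u' * b)⁻¹ := by rw [← h]; group
        rw [this]; group
      have hhW : b * s' * b⁻¹ ∈ Subgroup.closure D.Jset := by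
        rw [← e0]; exact conj_mem' hu' (Subgroup.subset_closure hs)
      have hl := hlen_u _ hhW
      have e1 : b * s' * b⁻¹ * b = b * s' := by group
      rw [e1, RMin.len hJ hbR (Subgroup.subset_closure hs'), len_of_mem cs (hJ hs')] at hl
      have hhJ : b * s' * b⁻¹ ∈ D.Jset := mem_of_len_one cs hJ hhW (by omega)
      have hhH : b * s' * b⁻¹ ∈ D.Hset b := ⟨hhJ, s', hs', rfl⟩
      have h6 : LI cs (b * s' * b⁻¹) wH :=
        hwH.2 _ (Subgroup.subset_closure hhH) (refl_of_mem cs (hH hhH))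
      rw [e0]
      intro hc
      have h7 := hc.2 h6
      have h5 := RMin.len hH hHmin (Subgroup.subset_closure hhH)
      have e : u' * (b * s' * b⁻¹) = s * u' := by rw [← e0]; group
      rw [e] at h5
      unfold LI at h7; omega
  -- conclusion
  have hwHi := hwH.inv_eq cs hH
  have hwHJ : wH * D.wJ ∈ Subgroup.closure D.Jset := Subgroup.mul_mem _ (hHle hwH.1) hT.1
  have hbeq : b = (wH * D.wJ) * mu := by
    have : u' = D.wJ * wH := by rw [← key, mul_assoc, hwH.mul_self cs hH, mul_one]
    rw [hmub, this, mul_assoc, mul_assoc, ← mul_assoc D.wJ D.wJ, hT.mul_self cs hJ, one_mul,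
      ← mul_assoc, hwH.mul_self cs hH, one_mul]
  obtain ⟨z, _, hz⟩ := D.hs0_hyper b
  rw [hz _ (D.hpr b)]
  symm
  apply hz
  refine ⟨hwHJ, ?_⟩
  have h9 := D.hLam_normal.conj_mem _ hmu.1 (wH * D.wJ)
  rwa [← hbeq] at h9

theorem poly_Hstar (b : W) :
    (∑ᶠ x : W, if x ∈ D.WHstar b then (Polynomial.X : Polynomial ℤ) ^ cs.length x else 0)
    = ∑ᶠ x : W, if x ∈ Subgroup.closure (D.Hset b)
        then (Polynomial.X : Polynomial ℤ) ^ cs.length x else 0 := by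
  rw [← finsum_comp_equiv D.st.toEquiv]
  congr 1
  ext1 x
  have h1 : D.WHstar b = (Subgroup.closure (D.Hset b)).map D.st.toMonoidHom := by
    rw [MonoidHom.map_closure]; rfl
  have h2 : D.st.toEquiv x ∈ D.WHstar b ↔ x ∈ Subgroup.closure (D.Hset b) := by
    rw [h1]
    exact Subgroup.mem_map_iff_mem (f := D.st.toMonoidHom) D.st.injective
  have h3 : cs.length (D.st.toEquiv x) = cs.length x := st_len D x
  simp only [h2, h3]

end P2


/-! ## Part 3 : reflections acting on `Λ_ℚ` -/
section P3
variable {cs : CoxeterSystem M W} (D : AffineData cs)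

/-- the rational space -/
abbrev VV : Type := Fin D.rank → ℚ

theorem iota_mul (l m : D.Lam) : D.iota (l * m) = D.iota l + D.iota m := by
  ext i; simp [AffineData.iota]

theorem iota_one : D.iota 1 = 0 := by ext i; simp [AffineData.iota]

theorem iota_inv (l : D.Lam) : D.iota l⁻¹ = - D.iota l := by
  ext i; simp [AffineData.iota]

theorem iota_zpow (l : D.Lam) (k : ℤ) : D.iota (l ^ k) = (k : ℚ) • D.iota l := by
  ext i; simp [AffineData.iota]

theorem iota_pow (l : D.Lam) (k : ℕ) : D.iota (l ^ k) = (k : ℚ) • D.iota l := by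
  ext i; simp [AffineData.iota]

theorem iota_inj {l m : D.Lam} (h : D.iota l = D.iota m) : l = m := by
  apply D.freeIso.injective
  apply Multiplicative.toAdd.injective
  ext i
  have := congrFun h i
  simpa [AffineData.iota] using this

theorem exists_iota (x : VV D) : ∃ (N : ℕ) (l : D.Lam), 0 < N ∧ D.iota l = (N : ℚ) • x := by
  refine ⟨∏ i, (x i).den, D.freeIso.symm (Multiplicative.ofAdd
    (fun i => (x i).num * ((∏ j, (x j).den) / (x i).den : ℕ))), ?_, ?_⟩
  · exact Finset.prod_pos (fun i _ => (x i).den_pos)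
  · ext i
    have hd : (x i).den ∣ ∏ j, (x j).den := Finset.dvd_prod_of_mem _ (Finset.mem_univ i)
    have h0 : ((x i).den : ℚ) ≠ 0 := by exact_mod_cast (x i).den_nz
    simp only [AffineData.iota, MulEquiv.apply_symm_apply, toAdd_ofAdd, Pi.smul_apply, smul_eq_mul,
      Int.cast_mul, Int.cast_natCast]
    rw [Nat.cast_div hd h0]
    conv_rhs => rw [← Rat.num_div_den (x i)]
    field_simp

theorem lin_ext {E : Type*} [AddCommGroup E] [Module ℚ E] {f g : VV D →ₗ[ℚ] E}
    (h : ∀ l : D.Lam, f (D.iota l) = g (D.iota l)) : f = g := by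
  ext1 x
  ext1
  obtain ⟨N, l, hN, hl⟩ := exists_iota D (LinearMap.single ℚ (fun _ => ℚ) x 1)
  have := h l
  rw [hl, map_smul, map_smul] at this
  have hN' : (N : ℚ) ≠ 0 := by exact_mod_cast hN.ne'
  exact smul_right_injective _ hN' this

/-- conjugation of a translation -/
def cj (w : W) (l : D.Lam) : D.Lam := ⟨w * (l : W) * w⁻¹, D.hLam_normal.conj_mem _ l.2 w⟩

theorem rho_iota (w : W) (l : D.Lam) : D.rho w (D.iota l) = D.iota (cj D w l) := D.hrho w l

theorem rho_mul (w w' : W) : D.rho (w * w') = D.rho w ∘ₗ D.rho w' := by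
  apply lin_ext
  intro l
  rw [LinearMap.comp_apply, rho_iota, rho_iota, rho_iota]
  congr 1
  ext
  simp [cj, mul_assoc]

theorem rho_one : D.rho 1 = LinearMap.id := by
  apply lin_ext
  intro l
  rw [rho_iota]
  simp [cj]

theorem rho_mul_apply (w w' : W) (x : VV D) : D.rho (w * w') x = D.rho w (D.rho w' x) := by
  rw [rho_mul]; rfl

theorem rho_inv_apply (w : W) (x : VV D) : D.rho w⁻¹ (D.rho w x) = x := by
  rw [← rho_mul_apply, inv_mul_cancel, rho_one]; rfl

theorem rho_apply_inv (w : W) (x : VV D) : D.rho w (D.rho w⁻¹ x) = x := by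
  rw [← rho_mul_apply, mul_inv_cancel, rho_one]; rfl

theorem rho_lam (l : D.Lam) : D.rho (l : W) = LinearMap.id := by
  apply lin_ext
  intro m
  rw [rho_iota]
  simp only [LinearMap.id_apply]
  congr 1
  ext
  simp only [cj]
  rw [D.hLam_comm _ l.2 _ m.2]; group

theorem rho_faithful {u : W} (hu : u ∈ Subgroup.closure D.Jset) (h : D.rho u = LinearMap.id) :
    u = 1 := by
  have hcomm : ∀ l : D.Lam, u * (l : W) * u⁻¹ = l := by
    intro l
    have := rho_iota D u l
    rw [h] at this
    have h2 := iota_inj D this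
    have h3 := congrArg (Subtype.val) h2
    simpa [cj] using h3.symm
  have hL : u ∈ D.Lam := by
    rw [D.hLam_mem]
    have hf : Finite (W ⧸ D.Lam) := by
      have := D.hLam_index
      exact Subgroup.finite_quotient_of_finiteIndex
    let g : W ⧸ D.Lam → W := fun q => q.out * u * (q.out)⁻¹
    apply (Set.finite_range g).subset
    rintro x hx
    obtain ⟨c, rfl⟩ := isConj_iff.1 hx
    refine ⟨(c : W ⧸ D.Lam), ?_⟩
    obtain ⟨l, hl⟩ := QuotientGroup.mk_out_eq_mul D.Lam c
    simp only [g]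
    rw [hl]
    have h4 := hcomm l
    have h5 : (l : W) * u * (l : W)⁻¹ = u := by
      have : u * (l : W) = l * u := by
        rw [← mul_inv_eq_iff_eq_mul]; exact h4
      rw [← this]; group
    calc c * (l : W) * u * (c * (l : W))⁻¹ = c * ((l : W) * u * (l : W)⁻¹) * c⁻¹ := by group
      _ = _ := by rw [h5]
  obtain ⟨z, _, hz⟩ := D.hs0_hyper u
  rw [hz u ⟨hu, by simp⟩, hz 1 ⟨Subgroup.one_mem _, by simpa using hL⟩]

variable (t : W)

/-- `γ_t = 1 - t` on translations -/
def gam (x : VV D) : VV D := x - D.rho t x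

theorem gam_add (x y : VV D) : gam D t (x + y) = gam D t x + gam D t y := by
  simp [gam, sub_add_sub_comm]

theorem gam_smul (c : ℚ) (x : VV D) : gam D t (c • x) = c • gam D t x := by
  simp [gam, smul_sub]

theorem gam_neg (x : VV D) : gam D t (- x) = - gam D t x := by
  simp [gam]; abel

variable {t}

theorem conj_eq_iff (m m' : D.Lam) :
    (m : W)⁻¹ * t * m = (m' : W)⁻¹ * t * m' ↔
      gam D t (D.iota m) = gam D t (D.iota m') := by
  have h1 : gam D t (D.iota m) = gam D t (D.iota m') ↔
      gam D t (D.iota (m * m'⁻¹)) = 0 := by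
    rw [iota_mul, iota_inv, gam_add, gam_neg, ← sub_eq_add_neg, sub_eq_zero]
  rw [h1, gam, sub_eq_zero, rho_iota]
  have h2 : D.iota (m * m'⁻¹) = D.iota (cj D t (m * m'⁻¹)) ↔
      ((m * m'⁻¹ : D.Lam) : W) = t * ((m * m'⁻¹ : D.Lam) : W) * t⁻¹ := by
    constructor
    · intro h; exact congrArg Subtype.val (iota_inj D h)
    · intro h; congr 1; exact Subtype.ext h
  rw [h2, Subgroup.coe_mul, Subgroup.coe_inv]
  have hc : (m : W) * (m' : W)⁻¹ = (m' : W)⁻¹ * m :=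
    D.hLam_comm _ m.2 _ (Subgroup.inv_mem _ m'.2)
  constructor
  · intro h
    have : t = (m : W) * ((m' : W)⁻¹ * t * m') * (m : W)⁻¹ := by rw [← h]; group
    rw [eq_mul_inv_iff_mul_eq]
    nth_rewrite 1 [this]
    have e : (m' : W) * (m : W)⁻¹ * ((m : W) * (m' : W)⁻¹) = 1 := by group
    calc (m : W) * (m' : W)⁻¹ * ((m : W) * ((m' : W)⁻¹ * t * m') * (m : W)⁻¹)
        = (m : W) * (m' : W)⁻¹ * ((m : W) * (m' : W)⁻¹) * t * ((m' : W) * (m : W)⁻¹) := by group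
      _ = t * ((m : W) * (m' : W)⁻¹) := by
        have h3 : t = (m : W) * (m' : W)⁻¹ * t * ((m' : W) * (m : W)⁻¹) := by
          nth_rewrite 1 [this]; group
        have h4 : t * ((m : W) * (m' : W)⁻¹) = (m : W) * (m' : W)⁻¹ * t := by
          nth_rewrite 1 [h3]; group
        rw [h4]
        calc _ = (m : W) * (m' : W)⁻¹ * ((m : W) * (m' : W)⁻¹ * t * ((m' : W) * (m : W)⁻¹)) := by group
          _ = _ := by rw [← h3]
  · intro h
    have h3 : t * ((m : W) * (m' : W)⁻¹) = (m : W) * (m' : W)⁻¹ * t := by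
      rw [eq_mul_inv_iff_mul_eq] at h; exact h.symm
    rw [hc] at h3
    have h4 : t * m = m * ((m' : W)⁻¹ * t * m') := by
      calc t * m = t * ((m' : W)⁻¹ * m) * m' := by
              rw [← hc]; group
            _ = (m' : W)⁻¹ * m * t * m' := by rw [h3]
            _ = _ := by rw [← hc]; group
    rw [mul_assoc, h4]; group

/-- bad set -/
def bad (t c : W) : Set (VV D) :=
  {v | ∃ m : D.Lam, gam D t (D.iota m) = v ∧ LI cs ((m : W)⁻¹ * t * m) c}

theorem bad_finite (ht : cs.IsReflection t) (c : W) : (bad D t c).Finite := by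
  let g : VV D → W := fun v => if h : ∃ m : D.Lam, gam D t (D.iota m) = v ∧
      LI cs ((m : W)⁻¹ * t * m) c then (h.choose : W)⁻¹ * t * h.choose else 1
  refine Set.Finite.of_injOn (f := g) (t := NN cs c) ?_ ?_ (NN_finite cs c)
  · intro v hv
    have hv' : ∃ m : D.Lam, gam D t (D.iota m) = v ∧ LI cs ((m : W)⁻¹ * t * m) c := hv
    simp only [g, dif_pos hv']
    exact ⟨refl_conj' cs ht _, hv'.choose_spec.2⟩
  · intro v hv w hw h
    have hv' : ∃ m : D.Lam, gam D t (D.iota m) = v ∧ LI cs ((m : W)⁻¹ * t * m) c := hv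
    have hw' : ∃ m : D.Lam, gam D t (D.iota m) = w ∧ LI cs ((m : W)⁻¹ * t * m) c := hw
    simp only [g, dif_pos hv', dif_pos hw'] at h
    rw [conj_eq_iff] at h
    rw [← hv'.choose_spec.1, ← hw'.choose_spec.1, h]

theorem LI_good (ht : cs.IsReflection t) (c : W) (m : D.Lam)
    (h : gam D t (D.iota m) ∉ bad D t c) : LI cs t (m * c) ↔ LI cs t m := by
  rw [LI_mul cs ht]
  have : ¬ LI cs ((m : W)⁻¹ * t * m) c := fun hc => h ⟨m, rfl, hc⟩
  tauto

theorem exists_noncomm (ht : cs.IsReflection t) (htJ : t ∈ Subgroup.closure D.Jset) :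
    ∃ l : D.Lam, gam D t (D.iota l) ≠ 0 := by
  by_contra hc
  push Not at hc
  have : t = 1 := by
    apply rho_faithful D htJ
    apply lin_ext
    intro l
    have := hc l
    rw [gam, sub_eq_zero] at this
    exact this.symm
  have h1 := ht.odd_length
  rw [this] at h1
  simp at h1

theorem ev_notin {v : VV D} (hv : v ≠ 0) {F : Set (VV D)} (hF : F.Finite) :
    ∀ᶠ k : ℕ in Filter.atTop, (k : ℚ) • v ∉ F := by
  have hinj : Function.Injective (fun k : ℕ => (k : ℚ) • v) := by
    intro a b h
    have := smul_left_injective ℚ hv h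
    exact_mod_cast this
  have := hinj.tendsto_cofinite
  rw [Nat.cofinite_eq_atTop] at this
  exact this hF.compl_mem_cofinite

theorem not_LI_comm (ht : cs.IsReflection t) (htJ : t ∈ Subgroup.closure D.Jset) (c : D.Lam)
    (hc : gam D t (D.iota c) = 0) : ¬ LI cs t c := by
  obtain ⟨l, hl⟩ := exists_noncomm D ht htJ
  obtain ⟨k, hk⟩ := (ev_notin D hl (bad_finite D ht (c : W))).exists
  have h1 := LI_good D ht (c : W) (l ^ k) (by rw [iota_pow, gam_smul]; exact hk)
  have h2 := LI_mul cs ht (c : W) ((l ^ k : D.Lam) : W)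
  have h3 : (c : W)⁻¹ * t * c = t := by
    have := (conj_eq_iff D (t := t) c 1).2 (by rw [hc, iota_one]; simp [gam])
    simpa using this
  rw [h3, D.hLam_comm _ c.2 _ (l ^ k).2] at h2
  tauto

theorem LI_congr (ht : cs.IsReflection t) (htJ : t ∈ Subgroup.closure D.Jset) {m m' : D.Lam}
    (h : gam D t (D.iota m) = gam D t (D.iota m')) : LI cs t m ↔ LI cs t m' := by
  have hc0 : gam D t (D.iota (m * m'⁻¹)) = 0 := by
    rw [iota_mul, iota_inv, gam_add, gam_neg, h, add_neg_cancel]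
  have h0 := not_LI_comm D ht htJ _ hc0
  have h3 : ((m * m'⁻¹ : D.Lam) : W)⁻¹ * t * (m * m'⁻¹ : D.Lam) = t := by
    have := (conj_eq_iff D (t := t) (m * m'⁻¹) 1).2 (by rw [hc0, iota_one]; simp [gam])
    simpa using this
  have h2 := LI_mul cs ht ((m * m'⁻¹ : D.Lam) : W) (m' : W)
  rw [h3] at h2
  have e : ((m * m'⁻¹ : D.Lam) : W) * m' = m := by simp
  rw [e] at h2
  tauto

theorem LI_inv_good (ht : cs.IsReflection t) (htJ : t ∈ Subgroup.closure D.Jset) (m : D.Lam)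
    (h : gam D t (D.iota m) ∉ bad D t t) : LI cs t (m⁻¹ : D.Lam) ↔ ¬ LI cs t m := by
  have h1 := LI_good D ht t m h
  have h2 := LI_or cs ht ((m : W) * t)
  have h3 : gam D t (D.iota (cj D t m)) = gam D t (D.iota m⁻¹) := by
    rw [← rho_iota, iota_inv, gam_neg, gam, gam, ← rho_mul_apply, ht.mul_self, rho_one]
    simp
  rw [← LI_congr D ht htJ h3]
  have e : ((cj D t m : D.Lam) : W) = t * (m * t) := by simp [cj, ht.inv, mul_assoc]
  rw [e, h2, h1]

theorem gam_dep (ht : cs.IsReflection t) (htJ : t ∈ Subgroup.closure D.Jset) (l l' : D.Lam) :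
    ∃ i j : ℤ, (i ≠ 0 ∨ j ≠ 0) ∧
      (i : ℚ) • gam D t (D.iota l) + (j : ℚ) • gam D t (D.iota l') = 0 := by
  by_contra hcon
  push Not at hcon
  let ph : ℤ × ℤ → VV D := fun p => (p.1 : ℚ) • gam D t (D.iota l) + (p.2 : ℚ) • gam D t (D.iota l')
  have hinj : Function.Injective ph := by
    rintro ⟨a, b⟩ ⟨c, d⟩ h
    simp only [ph] at h
    by_contra hne
    have h1 : (a - c ≠ 0 ∨ b - d ≠ 0) := by
      by_contra hh
      push Not at hh
      apply hne
      ext <;> simp <;> omega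
    apply hcon _ _ h1
    push_cast
    rw [sub_smul, sub_smul]
    have := sub_eq_zero.2 h
    rw [← this]; abel
  let F := bad D t (l : W) ∪ bad D t (l' : W) ∪ bad D t t
  have hF : F.Finite := ((bad_finite D ht _).union (bad_finite D ht _)).union (bad_finite D ht _)
  have hP : (ph ⁻¹' F).Finite := hF.preimage hinj.injOn
  obtain ⟨N, hN⟩ : ∃ N : ℕ, ∀ p ∈ ph ⁻¹' F, p.1.natAbs < N ∧ p.2.natAbs < N := by
    obtain ⟨N, hN⟩ := (hP.image (fun p => p.1.natAbs + p.2.natAbs)).bddAbove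
    refine ⟨N + 1, fun p hp => ?_⟩
    have := hN ⟨p, hp, rfl⟩
    simp only at this
    omega
  let m : ℤ → ℤ → D.Lam := fun i j => l ^ i * l' ^ j
  have hm : ∀ i j, gam D t (D.iota (m i j)) = ph (i, j) := by
    intro i j
    simp only [m, ph, iota_mul, iota_zpow, gam_add, gam_smul]
  have hgood : ∀ i j : ℤ, (N ≤ i.natAbs ∨ N ≤ j.natAbs) → ph (i, j) ∉ F := by
    intro i j h hc
    have := hN (i, j) hc
    simp only at this
    omega
  have hh : ∀ i j : ℤ, (N ≤ i.natAbs ∨ N ≤ j.natAbs) →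
      (LI cs t (m (i + 1) j) ↔ LI cs t (m i j)) := by
    intro i j h
    have h1 := LI_good D ht (l : W) (m i j) (by
      rw [hm]; intro hc; exact hgood i j h (Or.inl (Or.inl hc)))
    have e : ((m (i + 1) j : D.Lam) : W) = (m i j : D.Lam) * l := by
      simp only [m, Subgroup.coe_mul]
      rw [zpow_add_one, Subgroup.coe_mul, mul_assoc, D.hLam_comm _ l.2 _ (l' ^ j).2, mul_assoc]
    rw [e, h1]
  have hv : ∀ i j : ℤ, (N ≤ i.natAbs ∨ N ≤ j.natAbs) →
      (LI cs t (m i (j + 1)) ↔ LI cs t (m i j)) := by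
    intro i j h
    have h1 := LI_good D ht (l' : W) (m i j) (by
      rw [hm]; intro hc; exact hgood i j h (Or.inl (Or.inr hc)))
    have e : ((m i (j + 1) : D.Lam) : W) = (m i j : D.Lam) * l' := by
      simp only [m, Subgroup.coe_mul]
      rw [zpow_add_one, Subgroup.coe_mul, mul_assoc]
    rw [e, h1]
  have hH : ∀ j : ℤ, N ≤ j.natAbs → ∀ i : ℤ, (LI cs t (m i j) ↔ LI cs t (m 0 j)) := by
    intro j hj i
    induction i using Int.induction_on with
    | zero => rfl
    | succ i ih => rw [hh _ _ (Or.inr hj), ih]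
    | pred i ih =>
      rw [← ih, ← hh (-(i : ℤ) - 1) j (Or.inr hj)]; simp
  have hV : ∀ i : ℤ, N ≤ i.natAbs → ∀ j : ℤ, (LI cs t (m i j) ↔ LI cs t (m i 0)) := by
    intro i hi j
    induction j using Int.induction_on with
    | zero => rfl
    | succ j ih => rw [hv _ _ (Or.inl hi), ih]
    | pred j ih =>
      rw [← ih, ← hv i (-(j : ℤ) - 1) (Or.inl hi)]; simp
  have a1 := hV N (by simp) N
  have a2 := hV (-N) (by simp) N
  have a3 := hH N (by simp) N
  have a4 := hH N (by simp) (-N)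
  have a5 := LI_inv_good D ht htJ (m N 0) (by
    rw [hm]; intro hc; exact hgood N 0 (by simp) (Or.inr hc))
  have e : (m N 0)⁻¹ = m (-N) 0 := by simp [m]
  rw [e] at a5
  tauto

theorem ev_dich (ht : cs.IsReflection t) (l : D.Lam) (hl : gam D t (D.iota l) ≠ 0) :
    (∀ᶠ k : ℕ in Filter.atTop, LI cs t (l ^ k : D.Lam)) ∨
    (∀ᶠ k : ℕ in Filter.atTop, ¬ LI cs t (l ^ k : D.Lam)) := by
  obtain ⟨K, hK⟩ := Filter.eventually_atTop.1 (ev_notin D hl (bad_finite D ht (l : W)))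
  have hstep : ∀ k ≥ K, (LI cs t (l ^ (k + 1) : D.Lam) ↔ LI cs t (l ^ k : D.Lam)) := by
    intro k hk
    have h1 := LI_good D ht (l : W) (l ^ k) (by rw [iota_pow, gam_smul]; exact hK k hk)
    rw [pow_succ, Subgroup.coe_mul, h1]
  have hall : ∀ k ≥ K, (LI cs t (l ^ k : D.Lam) ↔ LI cs t (l ^ K : D.Lam)) := by
    intro k hk
    induction k, hk using Nat.le_induction with
    | base => rfl
    | succ k hk ih => rw [hstep k hk, ih]
  by_cases h : LI cs t (l ^ K : D.Lam)
  · left; exact Filter.eventually_atTop.2 ⟨K, fun k hk => (hall k hk).2 h⟩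
  · right; exact Filter.eventually_atTop.2 ⟨K, fun k hk => fun hc => h ((hall k hk).1 hc)⟩

theorem ev_inv (ht : cs.IsReflection t) (htJ : t ∈ Subgroup.closure D.Jset) (l : D.Lam)
    (hl : gam D t (D.iota l) ≠ 0) :
    ∀ᶠ k : ℕ in Filter.atTop, (LI cs t ((l⁻¹) ^ k : D.Lam) ↔ ¬ LI cs t (l ^ k : D.Lam)) := by
  filter_upwards [ev_notin D hl (bad_finite D ht t)] with k hk
  rw [inv_pow]
  exact LI_inv_good D ht htJ (l ^ k) (by rw [iota_pow, gam_smul]; exact hk)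

theorem exists_root (ht : cs.IsReflection t) (htJ : t ∈ Subgroup.closure D.Jset) :
    ∃ (α : VV D →ₗ[ℚ] ℚ) (a : VV D), (∀ x, D.rho t x = x - α x • a) ∧ α a = 2 ∧
      (∀ l : D.Lam, 0 < α (D.iota l) → ∀ᶠ k : ℕ in Filter.atTop, LI cs t (l ^ k : D.Lam)) ∧
      (∀ l : D.Lam, α (D.iota l) ≤ 0 → ∀ᶠ k : ℕ in Filter.atTop, ¬ LI cs t (l ^ k : D.Lam)) := by
  obtain ⟨l0, hl0, hs0⟩ : ∃ l0 : D.Lam, gam D t (D.iota l0) ≠ 0 ∧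
      ∀ᶠ k : ℕ in Filter.atTop, LI cs t (l0 ^ k : D.Lam) := by
    obtain ⟨l, hl⟩ := exists_noncomm D ht htJ
    rcases ev_dich D ht l hl with h | h
    · exact ⟨l, hl, h⟩
    · refine ⟨l⁻¹, by rw [iota_inv, gam_neg]; simpa using hl, ?_⟩
      filter_upwards [h, ev_inv D ht htJ l hl] with k h1 h2
      exact h2.2 h1
  set a := gam D t (D.iota l0) with ha
  have hline : ∀ x : VV D, ∃ q : ℚ, gam D t x = q • a := by
    intro x
    obtain ⟨N, l, hN, hl⟩ := exists_iota D x
    obtain ⟨i, j, hij, h⟩ := gam_dep D ht htJ l0 l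
    have hj : j ≠ 0 := by
      rintro rfl
      rcases hij with hi | hi
      · simp only [Int.cast_zero, zero_smul, add_zero, smul_eq_zero, Int.cast_eq_zero] at h
        tauto
      · exact hi rfl
    rw [hl, gam_smul] at h
    have hj' : (j : ℚ) ≠ 0 := by exact_mod_cast hj
    have hN' : (N : ℚ) ≠ 0 := by exact_mod_cast hN.ne'
    refine ⟨- (i : ℚ) / (j * N), ?_⟩
    have h2 : ((j : ℚ) * N) • gam D t x = (- (i : ℚ)) • a := by
      rw [mul_smul, neg_smul]
      exact eq_neg_of_add_eq_zero_right h
    rw [div_eq_inv_mul, mul_smul, ← h2, smul_smul, inv_mul_cancel₀ (mul_ne_zero hj' hN'), one_smul]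
  obtain ⟨i0, hi0⟩ : ∃ i, a i ≠ 0 := by
    by_contra hc; push Not at hc; exact hl0 (funext hc)
  let α : VV D →ₗ[ℚ] ℚ := (a i0)⁻¹ • (LinearMap.proj i0 ∘ₗ (LinearMap.id - D.rho t))
  have hα : ∀ x, gam D t x = α x • a := by
    intro x
    obtain ⟨q, hq⟩ := hline x
    have : α x = q := by
      have h1 : α x = (a i0)⁻¹ * (gam D t x) i0 := rfl
      rw [h1, hq]
      simp only [Pi.smul_apply, smul_eq_mul]
      field_simp
    rw [this, hq]
  have hρ : ∀ x, D.rho t x = x - α x • a := by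
    intro x; rw [← hα, gam]; abel
  have hαa : α a = 2 := by
    have h1 : gam D t a = (2 : ℚ) • a := by
      rw [ha, gam]
      have : D.rho t (gam D t (D.iota l0)) = - gam D t (D.iota l0) := by
        rw [gam, map_sub, ← rho_mul_apply, ht.mul_self, rho_one]; simp
      rw [this, two_smul]; abel
    rw [hα] at h1
    exact smul_left_injective ℚ hl0 h1
  have hne : ∀ l : D.Lam, α (D.iota l) ≠ 0 → gam D t (D.iota l) ≠ 0 := by
    intro l h h2
    rw [hα] at h2
    rcases smul_eq_zero.1 h2 with h3 | h3
    · exact h h3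
    · exact hl0 h3
  have hpos : ∀ l : D.Lam, 0 < α (D.iota l) →
      ∀ᶠ k : ℕ in Filter.atTop, LI cs t (l ^ k : D.Lam) := by
    intro l hl
    rcases ev_dich D ht l (hne l hl.ne') with h | h
    · exact h
    · exfalso
      set q := α (D.iota l) with hq
      have hnum : 0 < q.num := Rat.num_pos.2 hl
      obtain ⟨p, hp⟩ := Int.eq_ofNat_of_zero_le hnum.le
      have hp0 : 0 < p := by omega
      have hd0 : 0 < q.den := q.den_pos
      have hsame : ∀ k : ℕ, (LI cs t (l ^ (q.den * k) : D.Lam) ↔ LI cs t (l0 ^ (p * k) : D.Lam)) := by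
        intro k
        apply LI_congr D ht htJ
        rw [iota_pow, iota_pow, gam_smul, gam_smul, hα, ← hq, ← ha, smul_smul]
        congr 1
        have : q * q.den = p := by
          rw [Rat.mul_den_eq_num, hp]; simp
        push_cast
        linear_combination (k : ℚ) * this
      have t1 : Filter.Tendsto (fun k : ℕ => q.den * k) Filter.atTop Filter.atTop :=
        Filter.tendsto_id.const_mul_atTop' hd0
      have t2 : Filter.Tendsto (fun k : ℕ => p * k) Filter.atTop Filter.atTop :=
        Filter.tendsto_id.const_mul_atTop' hp0
      obtain ⟨k, hk1, hk2⟩ := ((t1.eventually h).and (t2.eventually hs0)).exists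
      exact hk1 ((hsame k).2 hk2)
  refine ⟨α, a, hρ, hαa, hpos, ?_⟩
  intro l hl
  rcases hl.lt_or_eq with h | h
  · have h1 := hpos l⁻¹ (by rw [iota_inv, map_neg]; linarith)
    filter_upwards [h1, ev_inv D ht htJ l (hne l h.ne)] with k h2 h3
    exact h3.1 h2
  · refine Filter.Eventually.of_forall (fun k => not_LI_comm D ht htJ _ ?_)
    rw [iota_pow, gam_smul, hα, h]; simp

end P3


/-! ## Part 4 : geometry of chambers -/
section P4
variable {cs : CoxeterSystem M W} (D : AffineData cs)

/-- reflections of `W_J` -/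
def Rf (t : W) : Prop := cs.IsReflection t ∧ t ∈ Subgroup.closure D.Jset

/-- the root functional -/
def al (t : W) : VV D →ₗ[ℚ] ℚ :=
  if h : Rf D t then (exists_root D h.1 h.2).choose else 0

/-- the coroot vector -/
def av (t : W) : VV D :=
  if h : Rf D t then (exists_root D h.1 h.2).choose_spec.choose else 0

theorem al_spec {t : W} (h : Rf D t) : (∀ x, D.rho t x = x - al D t x • av D t) ∧
      al D t (av D t) = 2 ∧
      (∀ l : D.Lam, 0 < al D t (D.iota l) →
        ∀ᶠ k : ℕ in Filter.atTop, LI cs t (l ^ k : D.Lam)) ∧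
      (∀ l : D.Lam, al D t (D.iota l) ≤ 0 →
        ∀ᶠ k : ℕ in Filter.atTop, ¬ LI cs t (l ^ k : D.Lam)) := by
  have := (exists_root D h.1 h.2).choose_spec.choose_spec
  unfold al av
  rw [dif_pos h, dif_pos h]
  exact this

theorem rho_al {t : W} (h : Rf D t) (x : VV D) : D.rho t x = x - al D t x • av D t :=
  (al_spec D h).1 x

theorem av_ne {t : W} (h : Rf D t) : av D t ≠ 0 := by
  intro h0
  have := (al_spec D h).2.1
  rw [h0, map_zero] at this
  norm_num at this

theorem al_zero_iff {t : W} (h : Rf D t) (x : VV D) : al D t x = 0 ↔ D.rho t x = x := by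
  rw [rho_al D h, sub_eq_self, smul_eq_zero]
  have := av_ne D h
  tauto

theorem Rf.conj' {t u : W} (h : Rf D t) (hu : u ∈ Subgroup.closure D.Jset) :
    Rf D (u⁻¹ * t * u) := ⟨refl_conj' cs h.1 u, LY.conj_mem' hu h.2⟩

theorem al_conj_zero {t u : W} (h : Rf D t) (hu : u ∈ Subgroup.closure D.Jset) (x : VV D) :
    al D t (D.rho u x) = 0 ↔ al D (u⁻¹ * t * u) x = 0 := by
  rw [al_zero_iff D h, al_zero_iff D (h.conj' D hu), rho_mul_apply, rho_mul_apply]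
  constructor
  · intro h1; rw [h1, rho_inv_apply]
  · intro h1
    conv_rhs => rw [← h1]
    rw [rho_apply_inv]

theorem al_sign {t u : W} (h : Rf D t) (hu : u ∈ Subgroup.closure D.Jset) (x : VV D)
    (hx : al D (u⁻¹ * t * u) x ≠ 0) :
    0 < al D t (D.rho u x) ↔ ¬ (LI cs t u ↔ 0 < al D (u⁻¹ * t * u) x) := by
  set t' := u⁻¹ * t * u with ht'
  have h' : Rf D t' := h.conj' D hu
  obtain ⟨N, l, hN, hl⟩ := exists_iota D x
  have hN' : (0 : ℚ) < N := by exact_mod_cast hN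
  have e1 : 0 < al D t' (D.iota l) ↔ 0 < al D t' x := by
    rw [hl, map_smul, smul_eq_mul]; exact mul_pos_iff_of_pos_left hN'
  have e2 : 0 < al D t (D.iota (cj D u l)) ↔ 0 < al D t (D.rho u x) := by
    rw [← rho_iota, hl, map_smul, map_smul, smul_eq_mul]; exact mul_pos_iff_of_pos_left hN'
  have e0 : al D t' (D.iota l) ≠ 0 := by
    rw [hl, map_smul, smul_eq_mul]; exact mul_ne_zero hN'.ne' hx
  rw [← e1, ← e2]
  have s1 := al_spec D h
  have s2 := al_spec D h'
  have hg : gam D t' (D.iota l) ≠ 0 := by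
    intro hc
    rw [gam, sub_eq_zero] at hc
    exact e0 ((al_zero_iff D h' _).2 hc.symm)
  have hcj : ∀ k : ℕ, (((cj D u l) ^ k : D.Lam) : W) = u * ((l ^ k : D.Lam) : W) * u⁻¹ := by
    intro k
    simp [cj]
  have hLI : ∀ᶠ k : ℕ in Filter.atTop, (LI cs t ((cj D u l) ^ k : D.Lam) ↔
      ¬ (LI cs t u ↔ LI cs t' (l ^ k : D.Lam))) := by
    filter_upwards [ev_notin D hg (bad_finite D h'.1 u⁻¹)] with k hk
    rw [hcj, mul_assoc, LI_mul cs h.1, ← ht',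
      LI_good D h'.1 u⁻¹ (l ^ k) (by rw [iota_pow, gam_smul]; exact hk)]
  have f1 : ∀ᶠ k : ℕ in Filter.atTop, (LI cs t ((cj D u l) ^ k : D.Lam) ↔
      0 < al D t (D.iota (cj D u l))) := by
    by_cases hc : 0 < al D t (D.iota (cj D u l))
    · filter_upwards [s1.2.2.1 _ hc] with k hk; exact iff_of_true hk hc
    · filter_upwards [s1.2.2.2 _ (not_lt.1 hc)] with k hk; exact iff_of_false hk hc
  have f2 : ∀ᶠ k : ℕ in Filter.atTop, (LI cs t' (l ^ k : D.Lam) ↔ 0 < al D t' (D.iota l)) := by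
    by_cases hc : 0 < al D t' (D.iota l)
    · filter_upwards [s2.2.2.1 _ hc] with k hk; exact iff_of_true hk hc
    · filter_upwards [s2.2.2.2 _ (not_lt.1 hc)] with k hk; exact iff_of_false hk hc
  obtain ⟨k, h1, h2, h3⟩ := (hLI.and (f1.and f2)).exists
  rw [← h2, h1, h3]

theorem pow_one_of_WJ {u : W} (hu : u ∈ Subgroup.closure D.Jset) : ∃ m : ℕ, 0 < m ∧ u ^ m = 1 := by
  have : Finite (Subgroup.closure D.Jset) := (WJ_finite D).to_subtype
  obtain ⟨m, hm, h⟩ := isOfFinOrder_iff_pow_eq_one.1 (isOfFinOrder_of_finite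
    (⟨u, hu⟩ : Subgroup.closure D.Jset))
  exact ⟨m, hm, by simpa using congrArg Subtype.val h⟩

theorem al_nonprop {t t' : W} (h : Rf D t) (h' : Rf D t') (c : ℚ)
    (hc : al D t' = c • al D t) : t = t' := by
  set a := av D t with ha
  set a' := av D t' with ha'
  set v := a - c • a' with hv
  have h2 : al D t a = 2 := (al_spec D h).2.1
  have h2' : al D t' a' = 2 := (al_spec D h').2.1
  have h3 : c * al D t a' = 2 := by rw [← h2', hc]; simp
  have hv0 : al D t v = 0 := by
    rw [hv, map_sub, map_smul, smul_eq_mul, h2, h3]; norm_num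
  have hstep : ∀ x, D.rho (t * t') x = x + al D t x • v := by
    intro x
    rw [rho_mul_apply, rho_al D h', rho_al D h, hc]
    simp only [map_sub, map_smul, LinearMap.smul_apply, smul_eq_mul, hv, ← ha, ← ha']
    have : al D t x - c * al D t x * al D t a' = - al D t x := by
      linear_combination (- al D t x) * h3
    rw [this, smul_sub, smul_smul]
    rw [mul_comm c]
    module
  have hpow : ∀ k : ℕ, ∀ x, D.rho ((t * t') ^ k) x = x + ((k : ℚ) * al D t x) • v := by
    intro k
    induction k with
    | zero => intro x; simp [rho_one]
    | succ k ih =>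
      intro x
      rw [pow_succ', rho_mul_apply, ih, hstep, map_add, map_smul, hv0]
      push_cast
      module
  have hm : t * t' ∈ Subgroup.closure D.Jset := Subgroup.mul_mem _ h.2 h'.2
  obtain ⟨m, hm0, hm1⟩ := pow_one_of_WJ D hm
  have h5 := hpow m a
  rw [hm1, rho_one, h2] at h5
  simp only [LinearMap.id_apply, left_eq_add, smul_eq_zero] at h5
  have hv00 : v = 0 := by
    rcases h5 with h5 | h5
    · have : (m : ℚ) ≠ 0 := by exact_mod_cast hm0.ne'
      simp [this] at h5
    · exact h5
  have : t * t' = 1 := by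
    apply rho_faithful D hm
    ext1 x
    ext1
    simp [hstep, hv00]
  rw [← h'.1.inv]
  exact eq_inv_of_mul_eq_one_left this

theorem Rf_finite : {t | Rf D t}.Finite := (WJ_finite D).subset (fun _ h => h.2)

theorem finite_S (D : AffineData cs) : (Set.range cs.simple).Finite := by
  have := D.finB
  exact Set.finite_range _

variable {L : Set W}

theorem Rf_of_L (hL : L ⊆ D.Jset) {t : W} (ht : cs.IsReflection t)
    (htL : t ∈ Subgroup.closure L) : Rf D t := ⟨ht, Subgroup.closure_mono hL htL⟩

/-- dominance for `L` -/
def Dom (L : Set W) (x : VV D) : Prop :=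
  ∀ t ∈ Subgroup.closure L, cs.IsReflection t → 0 ≤ al D t x

theorem exists_generic : ∃ x : VV D, ∀ t, Rf D t → al D t x ≠ 0 := by
  have : Finite {t | Rf D t} := (Rf_finite D).to_subtype
  obtain ⟨x, hx⟩ := Module.Dual.exists_forall_ne_zero_of_forall_exists (K := ℚ) (M := VV D)
    (fun t : {t | Rf D t} => al D t.1)
    (fun t => ⟨av D t.1, by rw [(al_spec D t.2).2.1]; norm_num⟩)
  exact ⟨x, fun t ht => hx ⟨t, ht⟩⟩

/-- generic vectors can be moved to the strictly dominant chamber -/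
theorem exists_strict (hL : L ⊆ D.Jset) (x : VV D) (hx : ∀ t, Rf D t → al D t x ≠ 0) :
    ∃ v ∈ Subgroup.closure L, ∀ t ∈ Subgroup.closure L, cs.IsReflection t →
      0 < al D t (D.rho v x) := by
  have hLS : L ⊆ Set.range cs.simple := hL.trans (Jset_sub D)
  have hfin : (Subgroup.closure L : Set W).Finite :=
    (WJ_finite D).subset (Subgroup.closure_mono hL)
  obtain ⟨wL, hwL⟩ := exists_isTop cs hfin
  obtain ⟨N, l, hN, hl⟩ := exists_iota D x
  have hN' : (0 : ℚ) < N := by exact_mod_cast hN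
  have e1 : ∀ t, 0 < al D t (D.iota l) ↔ 0 < al D t x := by
    intro t
    rw [hl, map_smul, smul_eq_mul]; exact mul_pos_iff_of_pos_left hN'
  have hev : ∀ᶠ k : ℕ in Filter.atTop, ∀ t ∈ {t | Rf D t},
      (LI cs t (l ^ k : D.Lam) ↔ 0 < al D t x) := by
    rw [Filter.eventually_all_finite (Rf_finite D)]
    intro t ht
    rw [← e1]
    by_cases hc : 0 < al D t (D.iota l)
    · filter_upwards [(al_spec D ht).2.2.1 _ hc] with k hk; exact iff_of_true hk hc
    · filter_upwards [(al_spec D ht).2.2.2 _ (not_lt.1 hc)] with k hk; exact iff_of_false hk hc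
  obtain ⟨k, hk⟩ := hev.exists
  obtain ⟨u, hu, y, hy1, hy2⟩ := exists_LMin cs hLS ((l ^ k : D.Lam) : W)
  have hsgn : ∀ t ∈ Subgroup.closure L, cs.IsReflection t → (LI cs t u ↔ 0 < al D t x) := by
    intro t ht hr
    rw [← hk t (Rf_of_L D hL hr ht), hy1, LMin.LI_mul_iff cs hLS hy2 hu ht hr]
  have hv : wL * u⁻¹ ∈ Subgroup.closure L := Subgroup.mul_mem _ hwL.1 (Subgroup.inv_mem _ hu)
  refine ⟨wL * u⁻¹, hv, fun t ht hr => ?_⟩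
  have hm := LY.conj_mem' hv ht
  have hr' := refl_conj' cs hr (wL * u⁻¹)
  rw [al_sign D (Rf_of_L D hL hr ht) (Subgroup.closure_mono hL hv) x
    (hx _ (Rf_of_L D hL hr' hm)), ← hsgn _ hm hr', ← LI_mul cs hr]
  simpa using hwL.2 t ht hr

theorem exists_delta : ∃ δ : VV D, ∀ t, Rf D t → 0 < al D t δ := by
  obtain ⟨x, hx⟩ := exists_generic D
  obtain ⟨v, _, h⟩ := exists_strict D (le_refl D.Jset) x hx
  exact ⟨_, fun t ht => h t ht.2 ht.1⟩

theorem exists_dom (hL : L ⊆ D.Jset) (x : VV D) :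
    ∃ v ∈ Subgroup.closure L, Dom D L (D.rho v x) := by
  obtain ⟨δ, hδ⟩ := exists_delta D
  have hev : ∀ᶠ ε : ℚ in nhdsWithin 0 (Set.Ioi 0), ∀ t ∈ {t | Rf D t},
      (al D t (x + ε • δ) ≠ 0 ∧ (al D t x ≠ 0 → (0 < al D t (x + ε • δ) ↔ 0 < al D t x))) := by
    rw [Filter.eventually_all_finite (Rf_finite D)]
    intro t ht
    have hd := hδ t ht
    rcases lt_or_ge (al D t x) 0 with hneg | hpos
    · have hb : 0 < - al D t x / al D t δ := div_pos (by linarith) hd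
      filter_upwards [Ioo_mem_nhdsGT hb] with ε hε
      have h1 : ε * al D t δ < - al D t x := by
        have := hε.2
        rwa [lt_div_iff₀ hd] at this
      rw [map_add, map_smul, smul_eq_mul]
      refine ⟨by linarith, fun _ => ⟨fun h => ?_, fun h => ?_⟩⟩ <;> linarith
    · filter_upwards [self_mem_nhdsWithin] with ε hε
      have hε' : 0 < ε := hε
      have := mul_pos hε' hd
      rw [map_add, map_smul, smul_eq_mul]
      refine ⟨by linarith, fun hne => ⟨fun _ => lt_of_le_of_ne hpos hne.symm, fun _ => by linarith⟩⟩
  obtain ⟨ε, hε⟩ := hev.exists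
  obtain ⟨v, hv, h⟩ := exists_strict D hL (x + ε • δ) (fun t ht => (hε t ht).1)
  refine ⟨v, hv, fun t ht hr => ?_⟩
  have hR := Rf_of_L D hL hr ht
  have hvJ := Subgroup.closure_mono hL hv
  have hR' := hR.conj' D hvJ
  by_cases h0 : al D (v⁻¹ * t * v) x = 0
  · exact ((al_conj_zero D hR hvJ x).2 h0).ge
  · have h1 := h t ht hr
    rw [al_sign D hR hvJ _ (hε _ hR').1, (hε _ hR').2 h0, ← al_sign D hR hvJ _ h0] at h1
    exact h1.le

theorem dom_stab (hL : L ⊆ D.Jset) {x : VV D} (hx : Dom D L x) :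
    ∀ n : ℕ, ∀ v ∈ Subgroup.closure L, cs.length v = n → Dom D L (D.rho v x) →
      v ∈ Subgroup.closure {s | s ∈ L ∧ al D s x = 0} := by
  have hLS : L ⊆ Set.range cs.simple := hL.trans (Jset_sub D)
  intro n
  induction n with
  | zero =>
    intro v _ h0 _
    rw [cs.length_eq_zero_iff] at h0
    rw [h0]; exact Subgroup.one_mem _
  | succ n ih =>
    intro v hv hn hd
    have hne : v⁻¹ ≠ 1 := by
      intro h; rw [inv_eq_one] at h; rw [h] at hn; simp at hn
    obtain ⟨s, hs, hs'⟩ := exists_descent cs hLS (Subgroup.inv_mem _ hv) hne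
    have hr := refl_of_mem cs (hLS hs)
    have hsW : s ∈ Subgroup.closure L := Subgroup.subset_closure hs
    have hlen := len_LI cs (hLS hs) hs'
    have e : s * v⁻¹ = (v * s)⁻¹ := by rw [mul_inv_rev, hr.inv]
    rw [e, cs.length_inv, cs.length_inv] at hlen
    have htW := conj_mem'' hv hsW
    have htr := refl_conj cs hr v
    have hvJ := Subgroup.closure_mono hL hv
    have hR := Rf_of_L D hL htr htW
    have e2 : v⁻¹ * (v * s * v⁻¹) * v = s := by group
    have hLI : LI cs (v * s * v⁻¹) v := by
      unfold LI
      have : v * s * v⁻¹ * v = v * s := by group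
      rw [this]; omega
    have hs0 : al D s x = 0 := by
      by_contra hne0
      have hpos : 0 < al D s x := lt_of_le_of_ne (hx s hsW hr) (Ne.symm hne0)
      have h1 := al_sign D hR hvJ x (by rw [e2]; exact hne0)
      rw [e2] at h1
      have h2 : ¬ 0 < al D (v * s * v⁻¹) (D.rho v x) := by tauto
      have h3 := hd _ htW htr
      have h4 : al D (v * s * v⁻¹) (D.rho v x) = 0 := le_antisymm (not_lt.1 h2) h3
      rw [al_conj_zero D hR hvJ, e2] at h4
      exact hne0 h4
    have hsx : D.rho s x = x := (al_zero_iff D (Rf_of_L D hL hr hsW) x).1 hs0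
    have hvs := ih (v * s) (Subgroup.mul_mem _ hv hsW) (by omega)
      (by rw [rho_mul_apply, hsx]; exact hd)
    have : v = (v * s) * s := by rw [mul_assoc, hr.mul_self, mul_one]
    rw [this]
    exact Subgroup.mul_mem _ hvs (Subgroup.subset_closure ⟨hs, hs0⟩)

theorem dom_neg (hL : L ⊆ D.Jset) {wL : W} (hwL : IsTop cs L wL) {x : VV D} (hx : Dom D L x) :
    Dom D L (D.rho wL (-x)) := by
  intro t ht hr
  have hR := Rf_of_L D hL hr ht
  have hwJ := Subgroup.closure_mono hL hwL.1
  have hm := LY.conj_mem' hwL.1 ht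
  have hr' := refl_conj' cs hr wL
  rw [map_neg, map_neg]
  by_cases h0 : al D (wL⁻¹ * t * wL) x = 0
  · rw [(al_conj_zero D hR hwJ x).2 h0]; simp
  · have hpos : 0 < al D (wL⁻¹ * t * wL) x := lt_of_le_of_ne (hx _ hm hr') (Ne.symm h0)
    have h1 := al_sign D hR hwJ x h0
    have h2 := hwL.2 t ht hr
    have h3 : ¬ 0 < al D t (D.rho wL x) := by tauto
    linarith [not_lt.1 h3]

/-- the `-1` eigenspace -/
def Em (w : W) : Submodule ℚ (VV D) := LinearMap.ker (D.rho w + LinearMap.id)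

theorem mem_Em {w : W} {x : VV D} : x ∈ Em D w ↔ D.rho w x = - x := by
  unfold Em
  rw [LinearMap.mem_ker, LinearMap.add_apply, LinearMap.id_apply, add_eq_zero_iff_eq_neg]

theorem Em_le (hL : L ⊆ D.Jset) {wL : W} (hwL : IsTop cs L wL) {w : W}
    (hw : w ∈ Subgroup.closure L) :
    Module.finrank ℚ (Em D w) ≤ Module.finrank ℚ (Em D wL) := by
  have hLS : L ⊆ Set.range cs.simple := hL.trans (Jset_sub D)
  obtain ⟨x, hxE, hx⟩ : ∃ x ∈ Em D w, ∀ t, Rf D t → (∃ y ∈ Em D w, al D t y ≠ 0) →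
      al D t x ≠ 0 := by
    have : Finite {t | Rf D t ∧ ∃ y ∈ Em D w, al D t y ≠ 0} :=
      ((Rf_finite D).subset (fun _ h => h.1)).to_subtype
    obtain ⟨x, hxE, hx⟩ := Module.Dual.exists_forall_mem_ne_zero_of_forall_exists (K := ℚ)
      (M := VV D) (Em D w)
      (fun t : {t | Rf D t ∧ ∃ y ∈ Em D w, al D t y ≠ 0} => al D t.1) (fun t => t.2.2)
    exact ⟨x, hxE, fun t ht h => hx ⟨t, ht, h⟩⟩
  obtain ⟨u, hu, hdom⟩ := exists_dom D hL x
  have huJ := Subgroup.closure_mono hL hu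
  have hw'x : ∀ e ∈ Em D w, D.rho (u * w * u⁻¹) (D.rho u e) = - D.rho u e := by
    intro e he
    rw [rho_mul_apply, rho_mul_apply, rho_inv_apply, (mem_Em D).1 he, map_neg]
  have hw' : u * w * u⁻¹ ∈ Subgroup.closure L := conj_mem'' hu hw
  have hv := dom_stab D hL hdom _ (wL * (u * w * u⁻¹)) (Subgroup.mul_mem _ hwL.1 hw') rfl
    (by rw [rho_mul_apply, hw'x x hxE]; exact dom_neg D hL hwL hdom)
  have hfix : ∀ g ∈ Subgroup.closure {s | s ∈ L ∧ al D s (D.rho u x) = 0},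
      ∀ e ∈ Em D w, D.rho g (D.rho u e) = D.rho u e := by
    intro g hg e he
    induction hg using Subgroup.closure_induction with
    | mem s hs =>
      have hR := Rf_of_L D hL (refl_of_mem cs (hLS hs.1)) (Subgroup.subset_closure hs.1)
      rw [← al_zero_iff D hR, al_conj_zero D hR huJ]
      by_contra hne
      exact hx _ (hR.conj' D huJ) ⟨e, he, hne⟩ ((al_conj_zero D hR huJ x).1 hs.2)
    | one => rw [rho_one]; rfl
    | mul a b _ _ ha hb => rw [rho_mul_apply, hb, ha]
    | inv a _ ha =>
      conv_lhs => rw [← ha]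
      rw [rho_inv_apply]
  have hmap : ∀ e ∈ Em D w, D.rho u e ∈ Em D wL := by
    intro e he
    rw [mem_Em]
    have h1 := hfix _ hv e he
    rw [rho_mul_apply, hw'x e he, map_neg] at h1
    rw [← h1]; simp only [neg_neg]; rw [h1]
  have hinj : Function.Injective ((D.rho u).restrict hmap) := by
    intro a b h
    have := congrArg Subtype.val h
    simp only [LinearMap.coe_restrict_apply] at this
    have h2 := congrArg (D.rho u⁻¹) this
    rw [rho_inv_apply, rho_inv_apply] at h2
    exact Subtype.ext h2
  exact LinearMap.finrank_le_finrank_of_injective hinj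

end P4


/-! ## Part 5 : Poincare polynomials of parabolic subgroups -/
section P5
variable {cs : CoxeterSystem M W} (D : AffineData cs)

/-- the parabolic subgroup as a finset -/
def WF (I : Set W) : Finset W :=
  (WJ_finite D).toFinset.filter (fun u => u ∈ Subgroup.closure I)

theorem mem_WF {I : Set W} (hI : I ⊆ D.Jset) {u : W} :
    u ∈ WF D I ↔ u ∈ Subgroup.closure I := by
  unfold WF
  rw [Finset.mem_filter, Set.Finite.mem_toFinset]
  exact ⟨fun h => h.2, fun h => ⟨Subgroup.closure_mono hI h, h⟩⟩

/-- minimal coset representatives -/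
def MR (L I : Set W) : Finset W := (WF D L).filter (fun x => RMin cs I x)

theorem sum_factor {A : Type} [AddCommMonoid A] {L I : Set W} (hL : L ⊆ D.Jset) (hIL : I ⊆ L)
    (f : W → A) :
    ∑ w ∈ WF D L, f w = ∑ x ∈ MR D L I, ∑ u ∈ WF D I, f (x * u) := by
  have hI := hIL.trans hL
  have hIS := hI.trans (Jset_sub D)
  rw [← Finset.sum_product']
  symm
  apply Finset.sum_bij (fun (p : W × W) _ => p.1 * p.2)
  · rintro ⟨x, u⟩ h
    rw [Finset.mem_product] at h
    simp only [MR, Finset.mem_filter] at h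
    rw [mem_WF D hL] at h ⊢
    rw [mem_WF D hI] at h
    exact Subgroup.mul_mem _ h.1.1 (Subgroup.closure_mono hIL h.2)
  · rintro ⟨x, u⟩ h ⟨x', u'⟩ h' he
    rw [Finset.mem_product] at h h'
    simp only [MR, Finset.mem_filter, mem_WF D hI] at h h'
    simp only at he
    have h1 : x' = x * (u * u'⁻¹) := by rw [← mul_assoc, he]; group
    have h2 := RMin.unique hIS h.1.2 h'.1.2 (Subgroup.mul_mem _ h.2 (Subgroup.inv_mem _ h'.2)) h1
    have h3 : u = u' := mul_inv_eq_one.1 h2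
    rw [h2, mul_one] at h1
    rw [h1, h3]
  · intro w hw
    rw [mem_WF D hL] at hw
    obtain ⟨u, hu, y, hy, hm⟩ := exists_LMin cs hIS w⁻¹
    refine ⟨(y⁻¹, u⁻¹), ?_, ?_⟩
    · rw [Finset.mem_product]
      simp only [MR, Finset.mem_filter, mem_WF D hI, mem_WF D hL]
      refine ⟨⟨?_, ?_⟩, Subgroup.inv_mem _ hu⟩
      · have : y⁻¹ = w * u := by
          rw [eq_comm, eq_inv_iff_mul_eq_one, mul_assoc, ← hy, mul_inv_cancel]
        rw [this]
        exact Subgroup.mul_mem _ hw (Subgroup.closure_mono hIL hu)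
      · simpa [RMin] using hm
    · simp only
      rw [← mul_inv_rev, ← hy, inv_inv]
  · rintro ⟨x, u⟩ h
    rfl

open Polynomial in
/-- Poincare polynomial -/
def PP (I : Set W) : ℚ[X] := ∑ u ∈ WF D I, X ^ cs.length u

open Polynomial in
/-- relative Poincare polynomial -/
def QQ (L I : Set W) : ℚ[X] := ∑ u ∈ MR D L I, X ^ cs.length u

theorem PP_eq {L I : Set W} (hL : L ⊆ D.Jset) (hIL : I ⊆ L) :
    PP D L = QQ D L I * PP D I := by
  have hI := hIL.trans hL
  have hIS := hI.trans (Jset_sub D)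
  unfold PP QQ
  rw [sum_factor D hL hIL, Finset.sum_mul]
  refine Finset.sum_congr rfl fun x hx => ?_
  rw [Finset.mul_sum]
  refine Finset.sum_congr rfl fun u hu => ?_
  simp only [MR, Finset.mem_filter] at hx
  rw [mem_WF D hI] at hu
  rw [RMin.len hIS hx.2 hu, pow_add]

theorem PP_ne (I : Set W) : PP D I ≠ 0 := by
  intro h
  have := congrArg (Polynomial.eval 1) h
  simp only [PP, Polynomial.eval_finsetSum, Polynomial.eval_pow, Polynomial.eval_X, one_pow,
    Polynomial.eval_zero, Finset.sum_const, nsmul_eq_mul, mul_one] at this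
  have h1 : (1 : W) ∈ WF D I := by
    simp only [WF, Finset.mem_filter, Set.Finite.mem_toFinset]
    exact ⟨Subgroup.one_mem _, Subgroup.one_mem _⟩
  have h2 : (WF D I).card = 0 := by exact_mod_cast this
  rw [Finset.card_eq_zero] at h2
  rw [h2] at h1
  simp at h1

theorem PP_empty : PP D ∅ = 1 := by
  have : WF D ∅ = {1} := by
    ext u
    rw [mem_WF D (Set.empty_subset _)]
    simp
  unfold PP
  rw [this]
  simp

theorem alt_sum {L : Finset W} (hL : (L : Set W) ⊆ D.Jset) {wL : W} (hwL : IsTop cs L wL) :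
    ∑ I ∈ L.powerset, (-1 : Polynomial ℚ) ^ I.card * QQ D L I
      = Polynomial.X ^ cs.length wL := by
  have hLS := hL.trans (Jset_sub D)
  have h1 : ∀ I ∈ L.powerset, (-1 : Polynomial ℚ) ^ I.card * QQ D L I
      = ∑ w ∈ WF D L, if RMin cs (I : Set W) w then
          (-1 : Polynomial ℚ) ^ I.card * Polynomial.X ^ cs.length w else 0 := by
    intro I _
    unfold QQ MR
    rw [Finset.sum_filter, Finset.mul_sum]
    refine Finset.sum_congr rfl fun w _ => ?_
    split_ifs <;> simp
  rw [Finset.sum_congr rfl h1, Finset.sum_comm]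
  have h2 : ∀ w ∈ WF D L, (∑ I ∈ L.powerset, if RMin cs (I : Set W) w then
          (-1 : Polynomial ℚ) ^ I.card * Polynomial.X ^ cs.length w else 0)
          = if w = wL then Polynomial.X ^ cs.length w else 0 := by
    intro w hw
    rw [mem_WF D hL] at hw
    rw [← Finset.sum_filter]
    have h3 : L.powerset.filter (fun I : Finset W => RMin cs (I : Set W) w)
        = (L.filter (fun s => ¬ LI cs s w⁻¹)).powerset := by
      ext I
      simp only [Finset.mem_filter, Finset.mem_powerset, RMin, LMin, Finset.subset_iff,
        Finset.mem_coe]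
      exact ⟨fun h s hs => ⟨h.1 hs, h.2 s hs⟩, fun h => ⟨fun s hs => (h hs).1, fun s hs => (h hs).2⟩⟩
    rw [h3, ← Finset.sum_mul]
    have h4 : (∑ I ∈ (L.filter (fun s => ¬ LI cs s w⁻¹)).powerset, (-1 : Polynomial ℚ) ^ I.card)
        = if L.filter (fun s => ¬ LI cs s w⁻¹) = ∅ then 1 else 0 := by
      have := congrArg (Int.cast : ℤ → Polynomial ℚ)
        (Finset.sum_powerset_neg_one_pow_card (x := L.filter (fun s => ¬ LI cs s w⁻¹)))
      push_cast at this
      exact this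
    rw [h4]
    have h5 : L.filter (fun s => ¬ LI cs s w⁻¹) = ∅ ↔ w = wL := by
      rw [Finset.filter_eq_empty_iff]
      constructor
      · intro h
        have := hwL.eq_of_descents cs hLS (Subgroup.inv_mem _ hw) (fun s hs => not_not.1 (h hs))
        rw [← hwL.inv_eq cs hLS, ← this, inv_inv]
      · rintro rfl s hs
        rw [hwL.inv_eq cs hLS, not_not]
        exact hwL.2 s (Subgroup.subset_closure hs) (refl_of_mem cs (hLS hs))
    simp only [h5]
    split_ifs <;> simp
  rw [Finset.sum_congr rfl h2, Finset.sum_ite_eq', if_pos ((mem_WF D hL).2 hwL.1)]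

theorem QQ_self {L : Set W} (hL : L ⊆ D.Jset) : QQ D L L = 1 := by
  have := PP_eq D hL (le_refl L)
  refine mul_right_cancel₀ (PP_ne D L) ?_
  rw [← this, one_mul]

end P5


/-! ## Part 6 : involutions and parabolic subgroups -/
section P6
variable {cs : CoxeterSystem M W} (D : AffineData cs)

theorem al_refl {t : W} (h : Rf D t) (x : VV D) : al D t (D.rho t x) = - al D t x := by
  rw [rho_al D h, map_sub, map_smul, (al_spec D h).2.1, smul_eq_mul]; ring

theorem al_pos_iff {t u : W} (h : Rf D t) (hu : u ∈ Subgroup.closure D.Jset) (hn : ¬ LI cs t u)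
    (x : VV D) : 0 < al D t (D.rho u x) ↔ 0 < al D (u⁻¹ * t * u) x := by
  by_cases h0 : al D (u⁻¹ * t * u) x = 0
  · rw [h0, (al_conj_zero D h hu x).2 h0]
  · rw [al_sign D h hu x h0]; tauto

theorem al_pos_iff' {t u : W} (h : Rf D t) (hu : u ∈ Subgroup.closure D.Jset) (hn : LI cs t u)
    (x : VV D) : al D t (D.rho u x) < 0 ↔ 0 < al D (u⁻¹ * t * u) x := by
  by_cases h0 : al D (u⁻¹ * t * u) x = 0
  · rw [h0, (al_conj_zero D h hu x).2 h0]
  · have h1 := al_sign D h hu x h0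
    have h2 : al D t (D.rho u x) ≠ 0 := fun hc => h0 ((al_conj_zero D h hu x).1 hc)
    have h3 : al D t (D.rho u x) < 0 ↔ ¬ (0 < al D t (D.rho u x)) := by
      rw [not_lt]; exact ⟨le_of_lt, fun h => lt_of_le_of_ne h h2⟩
    rw [h3, h1]; tauto

theorem al_neg_iff {t u : W} (h : Rf D t) (hu : u ∈ Subgroup.closure D.Jset) (hn : ¬ LI cs t u)
    (x : VV D) : al D t (D.rho u x) < 0 ↔ al D (u⁻¹ * t * u) x < 0 := by
  have := al_pos_iff D h hu hn (-x)
  simpa using this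

theorem Rf_simple {L : Set W} (hL : L ⊆ D.Jset) {s : W} (hs : s ∈ L) : Rf D s :=
  Rf_of_L D hL (refl_of_mem cs (Jset_sub D (hL hs))) (Subgroup.subset_closure hs)

theorem fix_of_al {L : Set W} (hL : L ⊆ D.Jset) {x : VV D} (hx : ∀ s ∈ L, al D s x = 0) {u : W}
    (hu : u ∈ Subgroup.closure L) : D.rho u x = x := by
  induction hu using Subgroup.closure_induction with
  | mem s hs => exact (al_zero_iff D (Rf_simple D hL hs) x).1 (hx s hs)
  | one => rw [rho_one]; rfl
  | mul a b _ _ ha hb => rw [rho_mul_apply, hb, ha]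
  | inv a _ ha =>
    conv_lhs => rw [← ha]
    rw [rho_inv_apply]

theorem exists_coweight {L : Set W} (hL : L ⊆ D.Jset) {s : W} (hs : s ∈ L) :
    ∃ x : VV D, al D s x = 1 ∧ ∀ t ∈ L, t ≠ s → al D t x = 0 := by
  obtain ⟨δ, hδ⟩ := exists_delta D
  set I : Set W := L \ {s} with hI
  have hIL : I ⊆ L := Set.sdiff_subset
  have hIJ := hIL.trans hL
  have hIS := hIJ.trans (Jset_sub D)
  have hRs := Rf_simple D hL hs
  set x : VV D := ∑ u ∈ WF D I, D.rho u δ with hx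
  have hpos : 0 < al D s x := by
    rw [hx, map_sum]
    apply Finset.sum_pos
    · intro u hu
      rw [mem_WF D hIJ] at hu
      have huJ := Subgroup.closure_mono hIJ hu
      have hn : ¬ LI cs s u := by
        intro hc
        have h1 := mem_of_LI cs hIS hu hRs.1 hc
        have h2 := mem_of_len_one cs hIS h1 (len_of_mem cs (Jset_sub D (hL hs)))
        exact h2.2 rfl
      rw [al_pos_iff D hRs huJ hn]
      exact hδ _ (hRs.conj' D huJ)
    · exact ⟨1, (mem_WF D hIJ).2 (Subgroup.one_mem _)⟩
  refine ⟨(al D s x)⁻¹ • x, ?_, ?_⟩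
  · rw [map_smul, smul_eq_mul, inv_mul_cancel₀ hpos.ne']
  · intro t ht hne
    have htI : t ∈ I := ⟨ht, hne⟩
    rw [map_smul]
    have : al D t x = 0 := by
      rw [al_zero_iff D (Rf_simple D hL ht), hx, map_sum]
      apply Finset.sum_bij (fun u _ => t * u)
      · intro u hu
        rw [mem_WF D hIJ] at hu ⊢
        exact Subgroup.mul_mem _ (Subgroup.subset_closure htI) hu
      · intro u _ v _ h
        exact mul_left_cancel h
      · intro u hu
        rw [mem_WF D hIJ] at hu
        exact ⟨t⁻¹ * u, (mem_WF D hIJ).2 (Subgroup.mul_mem _ (Subgroup.inv_mem _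
          (Subgroup.subset_closure htI)) hu), by group⟩
      · intro u _
        rw [rho_mul_apply]
    rw [this, smul_zero]

/-- `v` acts by `-1` on the roots of `K` -/
def Full (K : Set W) (v : W) : Prop := ∀ s ∈ K, ∀ x, al D s (D.rho v x) = - al D s x

theorem PL {L : Set W} (hL : L ⊆ D.Jset) {w : W} (hw : w ∈ Subgroup.closure L) (hww : w * w = 1) :
    ∃ g ∈ Subgroup.closure L, ∃ y, D.rho w y = y ∧ Dom D L (D.rho g y) ∧
      IsTop cs {s | s ∈ L ∧ al D s (D.rho g y) = 0} (g * w * g⁻¹) ∧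
      Full D {s | s ∈ L ∧ al D s (D.rho g y) = 0} (g * w * g⁻¹) := by
  set F : Submodule ℚ (VV D) := LinearMap.ker (D.rho w - LinearMap.id) with hF
  have memF : ∀ x, x ∈ F ↔ D.rho w x = x := by
    intro x
    rw [hF, LinearMap.mem_ker, LinearMap.sub_apply, LinearMap.id_apply, sub_eq_zero]
  obtain ⟨y, hyF, hy⟩ : ∃ x ∈ F, ∀ t, Rf D t → (∃ y ∈ F, al D t y ≠ 0) →
      al D t x ≠ 0 := by
    have : Finite {t | Rf D t ∧ ∃ y ∈ F, al D t y ≠ 0} :=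
      ((Rf_finite D).subset (fun _ h => h.1)).to_subtype
    obtain ⟨x, hxE, hx⟩ := Module.Dual.exists_forall_mem_ne_zero_of_forall_exists (K := ℚ)
      (M := VV D) F
      (fun t : {t | Rf D t ∧ ∃ y ∈ F, al D t y ≠ 0} => al D t.1) (fun t => t.2.2)
    exact ⟨x, hxE, fun t ht h => hx ⟨t, ht, h⟩⟩
  obtain ⟨g, hg, hdom⟩ := exists_dom D hL y
  have hgJ := Subgroup.closure_mono hL hg
  set K : Set W := {s | s ∈ L ∧ al D s (D.rho g y) = 0} with hK
  have hKL : K ⊆ L := fun s hs => hs.1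
  have hKJ := hKL.trans hL
  have hKS := hKJ.trans (Jset_sub D)
  have hw' : g * w * g⁻¹ ∈ Subgroup.closure L := conj_mem'' hg hw
  have hw'J := Subgroup.closure_mono hL hw'
  have hfix : D.rho (g * w * g⁻¹) (D.rho g y) = D.rho g y := by
    rw [rho_mul_apply, rho_mul_apply, rho_inv_apply, (memF y).1 hyF]
  have hw'K : g * w * g⁻¹ ∈ Subgroup.closure K :=
    dom_stab D hL hdom _ _ hw' rfl (by rw [hfix]; exact hdom)
  have hfull : Full D K (g * w * g⁻¹) := by
    intro s hs x
    have hR := Rf_simple D hKJ hs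
    have h1 : al D (g⁻¹ * s * g) y = 0 := (al_conj_zero D hR hgJ y).1 hs.2
    have h2 : ∀ z ∈ F, al D (g⁻¹ * s * g) z = 0 := by
      intro z hz
      by_contra hne
      exact hy _ (hR.conj' D hgJ) ⟨z, hz, hne⟩ h1
    have h3 : D.rho g⁻¹ x + D.rho w (D.rho g⁻¹ x) ∈ F := by
      rw [memF, map_add, ← rho_mul_apply D w w, hww, rho_one]
      simp only [LinearMap.id_apply]
      rw [add_comm]
    have h4 := (al_conj_zero D hR hgJ _).2 (h2 _ h3)
    rw [map_add, rho_apply_inv, map_add, ← rho_mul_apply, ← rho_mul_apply] at h4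
    linarith
  refine ⟨g, hg, y, (memF y).1 hyF, hdom, ?_, hfull⟩
  obtain ⟨v, hv⟩ := exists_isTop cs (I := K) ((WJ_finite D).subset (Subgroup.closure_mono hKJ))
  obtain ⟨δ, hδ⟩ := exists_delta D
  have : g * w * g⁻¹ = v := by
    apply hv.eq_of_descents cs hKS hw'K
    intro s hs
    have hR := Rf_simple D hKJ hs
    by_contra hn
    have h1 := (al_pos_iff D hR hw'J hn δ).2 (hδ _ (hR.conj' D hw'J))
    rw [hfull s hs δ] at h1
    have := hδ _ hR
    linarith
  rw [this]; exact hv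

theorem Em_conj_le (g w : W) :
    Module.finrank ℚ (Em D w) ≤ Module.finrank ℚ (Em D (g * w * g⁻¹)) := by
  have hmap : ∀ e ∈ Em D w, D.rho g e ∈ Em D (g * w * g⁻¹) := by
    intro e he
    rw [mem_Em, rho_mul_apply, rho_mul_apply, rho_inv_apply, (mem_Em D).1 he, map_neg]
  have hinj : Function.Injective ((D.rho g).restrict hmap) := by
    intro a b h
    have := congrArg Subtype.val h
    simp only [LinearMap.coe_restrict_apply] at this
    have h2 := congrArg (D.rho g⁻¹) this
    rw [rho_inv_apply, rho_inv_apply] at h2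
    exact Subtype.ext h2
  exact LinearMap.finrank_le_finrank_of_injective hinj

theorem Em_conj (g w : W) :
    Module.finrank ℚ (Em D (g * w * g⁻¹)) = Module.finrank ℚ (Em D w) := by
  apply le_antisymm _ (Em_conj_le D g w)
  have := Em_conj_le D g⁻¹ (g * w * g⁻¹)
  have h2 : g⁻¹ * (g * w * g⁻¹) * g⁻¹⁻¹ = w := by group
  rwa [h2] at this

/-- simple root coordinates on the `-1` eigenspace -/
def coordMap (L : Finset W) (w : W) : Em D w →ₗ[ℚ] (L → ℚ) :=
  (LinearMap.pi (fun s : L => al D s.1)).comp (Em D w).subtype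

theorem Em_le_card {L : Finset W} (hL : (L : Set W) ⊆ D.Jset) {w : W}
    (hw : w ∈ Subgroup.closure (L : Set W)) : Module.finrank ℚ (Em D w) ≤ L.card := by
  have hinj : Function.Injective (coordMap D L w) := by
    rw [← LinearMap.ker_eq_bot, LinearMap.ker_eq_bot']
    intro e he
    have h1 : ∀ s ∈ (L : Set W), al D s (e : VV D) = 0 := by
      intro s hs
      exact congrFun he ⟨s, hs⟩
    have h2 := fix_of_al D hL h1 hw
    have h3 := (mem_Em D).1 e.2
    rw [h2] at h3
    exact Subtype.ext (self_eq_neg.1 h3)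
  have := LinearMap.finrank_le_finrank_of_injective hinj
  simpa using this

theorem Em_full {L : Finset W} (hL : (L : Set W) ⊆ D.Jset) {w : W}
    (hw : w ∈ Subgroup.closure (L : Set W)) (hww : w * w = 1) (hf : Full D L w) :
    Module.finrank ℚ (Em D w) = L.card := by
  apply le_antisymm (Em_le_card D hL hw)
  choose! δ hδ1 hδ2 using fun s (hs : s ∈ (L : Set W)) => exists_coweight D hL hs
  have hsurj : Function.Surjective (coordMap D L w) := by
    intro c
    set x : VV D := ∑ s : L, c s • δ s with hx
    have hxE : (2⁻¹ : ℚ) • (x - D.rho w x) ∈ Em D w := by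
      rw [mem_Em, map_smul, map_sub, ← rho_mul_apply, hww, rho_one, ← smul_neg, neg_sub]
      rfl
    refine ⟨⟨_, hxE⟩, ?_⟩
    ext s
    have h1 : al D s x = c s := by
      rw [hx, map_sum, Finset.sum_eq_single s]
      · rw [map_smul, hδ1 s s.2, smul_eq_mul, mul_one]
      · intro t _ hts
        rw [map_smul, hδ2 t t.2 s s.2 (fun h => hts (Subtype.ext h.symm)), smul_zero]
      · simp
    change al D s ((2⁻¹ : ℚ) • (x - D.rho w x)) = c s
    rw [map_smul, map_sub, hf s s.2, h1, smul_eq_mul]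
    ring
  have := (coordMap D L w).finrank_range_le
  rw [LinearMap.range_eq_top.2 hsurj, finrank_top] at this
  simpa using this

end P6


/-! ## Part 7 : signed count of cosets -/
section P7
variable {cs : CoxeterSystem M W} (D : AffineData cs)

theorem al_comm {r t : W} (hr : Rf D r) (ht : Rf D t) (hc : r * t = t * r) (hne : r ≠ t)
    (x : VV D) : al D r (D.rho t x) = al D r x := by
  suffices h : al D r (av D t) = 0 by
    rw [rho_al D ht, map_sub, map_smul, h, smul_zero, sub_zero]
  by_contra h0
  set a := av D t with ha
  set c := al D t (D.rho r a) with hcdef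
  have ht2 : al D t a = 2 := (al_spec D ht).2.1
  have h1 : ∀ x, al D t x • D.rho r a = al D t (D.rho r x) • a := by
    intro x
    have h2 : D.rho r (D.rho t x) = D.rho t (D.rho r x) := by
      rw [← rho_mul_apply, hc, rho_mul_apply]
    rw [rho_al D ht, rho_al D ht (D.rho r x), map_sub, map_smul, sub_right_inj] at h2
    exact h2
  have h3 : (2 : ℚ) • D.rho r a = c • a := by have := h1 a; rwa [ht2] at this
  have h4 : (2 * al D r a) • av D r = (2 - c) • a := by
    rw [rho_al D hr, smul_sub, smul_smul] at h3
    rw [sub_smul, ← h3]; abel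
  have hk : av D r = ((2 * al D r a)⁻¹ * (2 - c)) • a := by
    rw [mul_smul, ← h4, smul_smul, inv_mul_cancel₀ (by simpa using h0), one_smul]
  set k := (2 * al D r a)⁻¹ * (2 - c) with hkdef
  have hk0 : k ≠ 0 := by
    intro h; rw [h, zero_smul] at hk; exact av_ne D hr hk
  have hane : a ≠ 0 := av_ne D ht
  have h5 : ∀ x, 2 * al D t x - 4 * k * al D r x = c * al D t x := by
    intro x
    have h6 := congrArg (fun z => al D t ((2 : ℚ) • z)) (h1 x)
    simp only [map_smul, smul_eq_mul, ht2] at h6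
    rw [← hcdef, rho_al D hr, map_sub, map_smul, hk, map_smul, ht2, smul_eq_mul, smul_eq_mul] at h6
    linarith
  apply hne
  symm
  apply al_nonprop D ht hr ((2 - c) / (4 * k))
  ext1 i
  have := h5 (Pi.single i 1)
  apply LinearMap.ext
  intro y
  simp only [LinearMap.comp_apply, LinearMap.smul_apply, smul_eq_mul]
  have h7 := h5 (LinearMap.single ℚ (fun _ => ℚ) i y)
  field_simp
  linarith

theorem exists_simple_refl (T : Finset W) (hT : ∀ t ∈ T, Rf D t) (hne : T.Nonempty)
    (hcl : ∀ t ∈ T, ∀ t' ∈ T, t⁻¹ * t' * t ∈ T) :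
    ∃ t0 ∈ T, ∀ t ∈ T, t ≠ t0 → ¬ LI cs t t0 := by
  obtain ⟨δ, hδ⟩ := exists_delta D
  obtain ⟨η, hη⟩ : ∃ η : VV D, ∀ t t', Rf D t → Rf D t' → t ≠ t' →
      al D t δ * al D t' η - al D t' δ * al D t η ≠ 0 := by
    have : Finite {t | Rf D t} := (Rf_finite D).to_subtype
    obtain ⟨x, hx⟩ := Module.Dual.exists_forall_ne_zero_of_forall_exists (K := ℚ) (M := VV D)
      (fun p : {p : {t | Rf D t} × {t | Rf D t} // p.1 ≠ p.2} =>
        al D p.1.1.1 δ • al D p.1.2.1 - al D p.1.2.1 δ • al D p.1.1.1) (by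
        rintro ⟨⟨⟨t, ht⟩, ⟨t', ht'⟩⟩, hp⟩
        by_contra hc
        push Not at hc
        apply hp
        simp only [Subtype.mk.injEq]
        have hpos := hδ t ht
        apply al_nonprop D ht ht' (al D t' δ / al D t δ)
        apply LinearMap.ext
        intro y
        have := hc y
        simp only [LinearMap.sub_apply, LinearMap.smul_apply, smul_eq_mul] at this ⊢
        field_simp
        linarith)
    refine ⟨x, fun t t' ht ht' h => ?_⟩
    have := hx ⟨⟨⟨t, ht⟩, ⟨t', ht'⟩⟩, fun hh => h (congrArg Subtype.val hh)⟩
    simpa using this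
  obtain ⟨t0, ht0, hmax⟩ := Finset.exists_max_image T (fun t => al D t η / al D t δ) hne
  refine ⟨t0, ht0, ?_⟩
  set z : VV D := (al D t0 η / al D t0 δ) • δ - η with hz
  have hR0 := hT t0 ht0
  have hz0 : al D t0 z = 0 := by
    have := hδ t0 hR0
    rw [hz, map_sub, map_smul, smul_eq_mul]; field_simp; ring
  have hzpos : ∀ t ∈ T, t ≠ t0 → 0 < al D t z := by
    intro t ht hn
    have h1 := hδ t (hT t ht)
    have h0 := hδ t0 hR0
    have h2 := hmax t ht
    have h3 : al D t η / al D t δ ≠ al D t0 η / al D t0 δ := by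
      intro h
      rw [div_eq_div_iff h1.ne' h0.ne'] at h
      apply hη t t0 (hT t ht) hR0 hn
      linarith
    have h4 := lt_of_le_of_ne h2 h3
    rw [div_lt_iff₀ h1] at h4
    rw [hz, map_sub, map_smul, smul_eq_mul]
    linarith
  intro t ht hn hLI
  have h1 := al_pos_iff' D (hT t ht) hR0.2 hLI z
  rw [(al_zero_iff D hR0 z).1 hz0] at h1
  have h2 := hzpos _ (hcl t0 ht0 t ht) (by
    intro h
    apply hn
    have : t = t0 * (t0⁻¹ * t * t0) * t0⁻¹ := by group
    rw [this, h]; group)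
  have h3 := hzpos t ht hn
  linarith [h1.2 h2]

/-- sign of a root at a point -/
def eps (t : W) (p : VV D) : ℚ := if al D t p < 0 then -1 else 1

theorem eps_sq (t : W) (p : VV D) : eps D t p * eps D t p = 1 := by
  unfold eps; split_ifs <;> norm_num

theorem eps_conj {t t0 : W} (ht : Rf D t) (ht0 : Rf D t0) (hn : ¬ LI cs t t0) (p : VV D) :
    eps D t (D.rho t0 p) = eps D (t0⁻¹ * t * t0) p := by
  unfold eps
  simp only [al_neg_iff D ht ht0.2 hn p]

theorem signed_count : ∀ (n : ℕ) (T : Finset W), T.card = n → (∀ t ∈ T, Rf D t) →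
    (∀ t ∈ T, ∀ t' ∈ T, t⁻¹ * t' * t ∈ T) →
    ∃ v ∈ Subgroup.closure (T : Set W), v * v = 1 ∧ ∀ (p : VV D) (A : Finset W),
      (∀ t ∈ T, ∀ w ∈ A, t * w ∈ A) → (∃ w ∈ A, D.rho v (D.rho w p) = D.rho w p) →
      0 < ∑ w ∈ A, ∏ t ∈ T, eps D t (D.rho w p) := by
  intro n
  induction n using Nat.strong_induction_on with
  | _ n ih =>
  intro T hn hT hcl
  rcases T.eq_empty_or_nonempty with rfl | hne
  · refine ⟨1, Subgroup.one_mem _, one_mul _, ?_⟩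
    rintro p A - ⟨w, hw, -⟩
    simp only [Finset.prod_empty, Finset.sum_const, nsmul_eq_mul, mul_one]
    exact_mod_cast Finset.card_pos.2 ⟨w, hw⟩
  obtain ⟨t0, ht0, hsim⟩ := exists_simple_refl D T hT hne hcl
  have hR0 := hT t0 ht0
  have h00 : t0 * t0 = 1 := hR0.1.mul_self
  have h0i : t0⁻¹ = t0 := hR0.1.inv
  set T' := (T.erase t0).filter (fun t => t0 * t = t * t0) with hT'
  have memT' : ∀ t, t ∈ T' ↔ t ≠ t0 ∧ t ∈ T ∧ t0 * t = t * t0 := by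
    intro t; rw [hT', Finset.mem_filter, Finset.mem_erase, and_assoc]
  have hsub : T' ⊆ T := fun t ht => ((memT' t).1 ht).2.1
  have hlt : T'.card < n := by
    rw [← hn]
    apply Finset.card_lt_card
    refine ⟨hsub, fun h => ?_⟩
    exact ((memT' t0).1 (h ht0)).1 rfl
  obtain ⟨v, hv, hvv, hv3⟩ := ih _ hlt T' rfl (fun t ht => hT t (hsub ht)) (by
    intro t ht t' ht'
    rw [memT'] at ht ht' ⊢
    refine ⟨?_, hcl t ht.2.1 t' ht'.2.1, ?_⟩
    · intro h
      apply ht'.1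
      have : t' = t * (t⁻¹ * t' * t) * t⁻¹ := by group
      rw [this, h, ← ht.2.2]; group
    · have h1 : Commute t0 t := ht.2.2
      have h2 : Commute t0 t' := ht'.2.2
      exact ((h1.inv_right.mul_right h2).mul_right h1).eq)
  have hcomm : t0 * v = v * t0 := by
    have : v ∈ Subgroup.centralizer {t0} := by
      have hle : Subgroup.closure (T' : Set W) ≤ Subgroup.centralizer {t0} := by
        rw [Subgroup.closure_le]
        intro t ht
        rw [SetLike.mem_coe, Subgroup.mem_centralizer_singleton_iff]
        exact ((memT' t).1 ht).2.2.symm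
      exact hle hv
    rw [Subgroup.mem_centralizer_singleton_iff] at this
    exact this.symm
  have halv : ∀ x, al D t0 (D.rho v x) = al D t0 x := by
    clear hvv hv3 hcomm
    induction hv using Subgroup.closure_induction with
    | mem t ht =>
      have := (memT' t).1 ht
      exact al_comm D hR0 (hT t this.2.1) this.2.2 this.1.symm
    | one => intro x; rw [rho_one]; rfl
    | mul a b _ _ ha hb => intro x; rw [rho_mul_apply, ha, hb]
    | inv a _ ha => intro x; rw [← ha, rho_apply_inv]
  refine ⟨t0 * v, Subgroup.mul_mem _ (Subgroup.subset_closure ht0)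
    (Subgroup.closure_mono (Finset.coe_subset.2 hsub) hv), ?_, ?_⟩
  · calc t0 * v * (t0 * v) = t0 * (v * t0) * v := by group
      _ = (t0 * t0) * (v * v) := by rw [← hcomm]; group
      _ = 1 := by rw [h00, hvv, one_mul]
  intro p A hA hex
  have hconjT : ∀ t ∈ T.erase t0, t0⁻¹ * t * t0 ∈ T.erase t0 := by
    intro t ht
    rw [Finset.mem_erase] at ht ⊢
    refine ⟨?_, hcl t0 ht0 t ht.2⟩
    intro h
    apply ht.1
    have : t = t0 * (t0⁻¹ * t * t0) * t0⁻¹ := by group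
    rw [this, h]; group
  have hinv2 : ∀ t, t0⁻¹ * (t0⁻¹ * t * t0) * t0 = t := by
    intro t
    calc t0⁻¹ * (t0⁻¹ * t * t0) * t0 = (t0⁻¹ * t0⁻¹) * t * (t0 * t0) := by group
      _ = t := by rw [h0i, h00]; group
  have heps : ∀ t ∈ T.erase t0, ∀ q, eps D t (D.rho t0 q) = eps D (t0⁻¹ * t * t0) q := by
    intro t ht q
    rw [Finset.mem_erase] at ht
    exact eps_conj D (hT t ht.2) hR0 (hsim t ht.2 ht.1) q
  -- the non-fixed points cancel
  rw [← Finset.sum_filter_add_sum_filter_not A (fun w => al D t0 (D.rho w p) = 0)]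
  have hcancel : ∑ w ∈ A.filter (fun w => ¬ al D t0 (D.rho w p) = 0),
      ∏ t ∈ T, eps D t (D.rho w p) = 0 := by
    apply Finset.sum_involution (fun w _ => t0 * w)
    · intro w hw
      rw [Finset.mem_filter] at hw
      have h1 : ∏ t ∈ T, eps D t (D.rho (t0 * w) p) = - ∏ t ∈ T, eps D t (D.rho w p) := by
        rw [← Finset.mul_prod_erase T _ ht0, ← Finset.mul_prod_erase T _ ht0, rho_mul_apply]
        have h2 : ∏ t ∈ T.erase t0, eps D t (D.rho t0 (D.rho w p))
            = ∏ t ∈ T.erase t0, eps D t (D.rho w p) := by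
          apply Finset.prod_nbij' (fun t => t0⁻¹ * t * t0) (fun t => t0⁻¹ * t * t0)
          · exact hconjT
          · exact hconjT
          · intro t _; exact hinv2 t
          · intro t _; exact hinv2 t
          · intro t ht; exact heps t ht _
        have h3 : eps D t0 (D.rho t0 (D.rho w p)) = - eps D t0 (D.rho w p) := by
          unfold eps
          rw [al_refl D hR0]
          rcases lt_or_gt_of_ne hw.2 with h | h
          · rw [if_pos h, if_neg (by linarith)]; norm_num
          · rw [if_neg (by linarith : ¬ al D t0 (D.rho w p) < 0), if_pos (by linarith)]
        rw [h2, h3]; ring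
      rw [h1]; ring
    · intro w hw _ h
      have h8 := LI_self cs hR0.1
      rw [mul_eq_right.1 h] at h8
      exact not_LI_one cs h8
    · intro w hw
      rw [Finset.mem_filter] at hw ⊢
      refine ⟨hA t0 ht0 w hw.1, ?_⟩
      rw [rho_mul_apply, al_refl D hR0, neg_eq_zero]
      exact hw.2
    · intro w hw
      rw [← mul_assoc, h00, one_mul]
  rw [hcancel, add_zero]
  have hrest : ∀ w ∈ A.filter (fun w => al D t0 (D.rho w p) = 0),
      ∏ t ∈ T, eps D t (D.rho w p) = ∏ t ∈ T', eps D t (D.rho w p) := by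
    intro w hw
    rw [Finset.mem_filter] at hw
    rw [← Finset.mul_prod_erase T _ ht0,
      ← Finset.prod_filter_mul_prod_filter_not (T.erase t0) (fun t => t0 * t = t * t0)]
    have h1 : eps D t0 (D.rho w p) = 1 := by
      unfold eps; rw [if_neg]; rw [hw.2]; exact lt_irrefl _
    have hfix := (al_zero_iff D hR0 _).1 hw.2
    have h2 : ∏ t ∈ (T.erase t0).filter (fun t => ¬ t0 * t = t * t0), eps D t (D.rho w p) = 1 := by
      apply Finset.prod_involution (fun t _ => t0⁻¹ * t * t0)
      · intro t ht
        rw [Finset.mem_filter] at ht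
        rw [← heps t ht.1, hfix, eps_sq]
      · intro t ht _ h
        rw [Finset.mem_filter] at ht
        apply ht.2
        calc t0 * t = t0 * (t0⁻¹ * t * t0) := by rw [h]
          _ = t * t0 := by group
      · intro t ht
        rw [Finset.mem_filter] at ht ⊢
        refine ⟨hconjT t ht.1, fun h => ht.2 ?_⟩
        have h5 : t0 * (t0⁻¹ * t * t0) = t * t0 := by group
        have h6 : t0⁻¹ * t * t0 * t0 = t0 * t := by rw [h0i, mul_assoc, h00, mul_one]
        rw [← h6, ← h5, h]
      · intro t _; exact hinv2 t
    rw [h1, h2, one_mul, mul_one]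
  rw [Finset.sum_congr rfl hrest]
  apply hv3
  · intro t ht w hw
    have ht' := (memT' t).1 ht
    rw [Finset.mem_filter] at hw ⊢
    refine ⟨hA t ht'.2.1 w hw.1, ?_⟩
    rw [rho_mul_apply, al_comm D hR0 (hT t ht'.2.1) ht'.2.2 ht'.1.symm]
    exact hw.2
  · obtain ⟨w, hw, h⟩ := hex
    have h1 : al D t0 (D.rho w p) = 0 := by
      have := congrArg (al D t0) h
      rw [rho_mul_apply, al_refl D hR0, halv] at this
      linarith
    refine ⟨w, Finset.mem_filter.2 ⟨hw, h1⟩, ?_⟩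
    have h2 := congrArg (D.rho t0) h
    rwa [← rho_mul_apply, ← mul_assoc, h00, one_mul, (al_zero_iff D hR0 _).1 h1] at h2

theorem eng {L : Set W} (hL : L ⊆ D.Jset) :
    ∃ K ⊆ L, ∃ v ∈ Subgroup.closure L, IsTop cs K v ∧ Full D K v ∧
      0 < (QQ D L K).eval (-1) := by
  have hLS := hL.trans (Jset_sub D)
  set T := (WF D L).filter (fun t => cs.IsReflection t) with hT
  have memT : ∀ t, t ∈ T ↔ t ∈ Subgroup.closure L ∧ cs.IsReflection t := by
    intro t; rw [hT, Finset.mem_filter, mem_WF D hL]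
  obtain ⟨v, hv, hvv, hv3⟩ := signed_count D _ T rfl
    (fun t ht => Rf_of_L D hL ((memT t).1 ht).2 ((memT t).1 ht).1)
    (by
      intro t ht t' ht'
      rw [memT] at ht ht' ⊢
      exact ⟨conj_mem' ht.1 ht'.1, refl_conj' cs ht'.2 t⟩)
  have hvL : v ∈ Subgroup.closure L := by
    have hle : Subgroup.closure (T : Set W) ≤ Subgroup.closure L := by
      rw [Subgroup.closure_le]
      intro t ht
      exact ((memT t).1 ht).1
    exact hle hv
  obtain ⟨g, hg, y, hy, hdom, htop, hfull⟩ := PL D hL hvL hvv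
  set p := D.rho g y with hp
  set K : Set W := {s | s ∈ L ∧ al D s p = 0} with hK
  have hKL : K ⊆ L := fun s hs => hs.1
  have hKJ := hKL.trans hL
  have hKS := hKJ.trans (Jset_sub D)
  refine ⟨K, hKL, g * v * g⁻¹, Subgroup.closure_mono hKL htop.1, htop, hfull, ?_⟩
  have hpos := hv3 p (WF D L) (by
      intro t ht w hw
      rw [mem_WF D hL] at hw ⊢
      exact Subgroup.mul_mem _ ((memT t).1 ht).1 hw)
    ⟨g⁻¹, (mem_WF D hL).2 (Subgroup.inv_mem _ hg), by rw [hp, rho_inv_apply, hy]⟩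
  rw [sum_factor D hL hKL] at hpos
  have hx : ∀ x ∈ MR D L K, ∑ u ∈ WF D K, ∏ t ∈ T, eps D t (D.rho (x * u) p)
      = (WF D K).card * (-1) ^ cs.length x := by
    intro x hx
    rw [MR, Finset.mem_filter, mem_WF D hL] at hx
    have hxJ := Subgroup.closure_mono hL hx.1
    have h1 : ∀ u ∈ WF D K, ∏ t ∈ T, eps D t (D.rho (x * u) p) = (-1) ^ cs.length x := by
      intro u hu
      rw [mem_WF D hKJ] at hu
      rw [rho_mul_apply, fix_of_al D hKJ (fun s hs => hs.2) hu]
      have h2 : ∀ t ∈ T, eps D t (D.rho x p) = if LI cs t x then -1 else 1 := by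
        intro t ht
        rw [memT] at ht
        have hR := Rf_of_L D hL ht.2 ht.1
        have hmem : x⁻¹ * t * x ∈ Subgroup.closure L := conj_mem' hx.1 ht.1
        have hge := hdom _ hmem (refl_conj' cs ht.2 x)
        unfold eps
        by_cases hLI : LI cs t x
        · rw [if_pos hLI, if_pos]
          rw [al_pos_iff' D hR hxJ hLI]
          refine lt_of_le_of_ne hge (fun h0 => ?_)
          have hfx := (al_zero_iff D (hR.conj' D hxJ) p).1 h0.symm
          have hin := dom_stab D hL hdom _ _ hmem rfl (by rw [hfx]; exact hdom)
          have hno := LMin.noLI cs hKS hx.2 _ hin (refl_conj' cs ht.2 x)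
          have h3 := LI_mul cs ht.2 x x⁻¹
          rw [mul_inv_cancel] at h3
          have h4 := not_LI_one cs (t := t)
          tauto
        · rw [if_neg hLI, if_neg]
          rw [al_neg_iff D hR hxJ hLI, not_lt]
          exact hge
      rw [Finset.prod_congr rfl h2, Finset.prod_ite, Finset.prod_const, Finset.prod_const_one,
        mul_one]
      congr 1
      rw [← NN_ncard, ← Set.ncard_coe_finset]
      congr 1
      ext t
      simp only [Finset.coe_filter, Set.mem_ofPred_eq, NN, memT]
      exact ⟨fun h => ⟨h.1.2, h.2⟩, fun h => ⟨⟨mem_of_LI cs hLS hx.1 h.1 h.2, h.1⟩, h.2⟩⟩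
    rw [Finset.sum_congr rfl h1, Finset.sum_const, nsmul_eq_mul]
  rw [Finset.sum_congr rfl hx, ← Finset.mul_sum] at hpos
  have h0 : (0 : ℚ) ≤ (WF D K).card := Nat.cast_nonneg _
  have := pos_of_mul_pos_right hpos h0
  unfold QQ
  rw [Polynomial.eval_finsetSum]
  simpa using this

end P7


/-! ## Part 8 : order of vanishing at `-1` -/
section P8poly
open Polynomial

theorem Y_eval (f : ℚ[X]) : (X + 1 : ℚ[X]) ∣ f ↔ f.eval (-1) = 0 := by
  have : (X + 1 : ℚ[X]) = X - C (-1) := by simp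
  rw [this, dvd_iff_isRoot, IsRoot]

theorem Y_prime : Prime (X + 1 : ℚ[X]) := by
  have : (X + 1 : ℚ[X]) = X - C (-1) := by simp
  rw [this]; exact prime_X_sub_C _

theorem Y_le {a k : ℕ} {f R : ℚ[X]} (hR : R.eval (-1) ≠ 0)
    (h : f * (X + 1) ^ a = (X + 1) ^ k * R) : a ≤ k := by
  have h1 : (X + 1 : ℚ[X]) ^ a ∣ (X + 1) ^ k * R := ⟨f, by rw [← h, mul_comm]⟩
  have h2 := Y_prime.pow_dvd_of_dvd_mul_right a (fun h => hR ((Y_eval R).1 h)) h1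
  exact (pow_dvd_pow_iff Y_prime.ne_zero Y_prime.not_isUnit).1 h2

theorem Y_uniq {a b : ℕ} {R R' : ℚ[X]} (hR : R.eval (-1) ≠ 0) (hR' : R'.eval (-1) ≠ 0)
    (h : (X + 1) ^ a * R = (X + 1) ^ b * R') : a = b :=
  le_antisymm (Y_le hR' (by rw [mul_comm, h])) (Y_le hR (by rw [mul_comm, ← h]))

theorem poly_full {ι : Type} (A : Finset ι) (P : ℚ[X]) (hP : P ≠ 0) (Q R : ι → ℚ[X])
    (m c : ι → ℕ) (n N : ℕ) (hQ : ∀ i ∈ A, P = Q i * ((X + 1) ^ m i * R i))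
    (hR : ∀ i ∈ A, 0 < (R i).eval (-1)) (hmc : ∀ i ∈ A, m i ≤ c i) (hcn : ∀ i ∈ A, c i ≤ n)
    (hex : ∃ i ∈ A, m i = n) (hN : 0 < N) (hpar : Even (N + (n + 1)))
    (hid : ∑ i ∈ A, (-1 : ℚ[X]) ^ c i * Q i + (-1) ^ (n + 1) = X ^ N) :
    ∃ S : ℚ[X], P = (X + 1) ^ (n + 1) * S ∧ 0 < S.eval (-1) := by
  obtain ⟨S, hS, hSn⟩ := exists_eq_pow_rootMultiplicity_mul_and_not_dvd P hP (-1)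
  set k := rootMultiplicity (-1) P with hk
  have hY : (X - C (-1) : ℚ[X]) = X + 1 := by simp
  rw [hY] at hS hSn
  have hS0 : S.eval (-1) ≠ 0 := fun h => hSn ((Y_eval S).2 h)
  have hYne : (X + 1 : ℚ[X]) ≠ 0 := Y_prime.ne_zero
  have hmk : ∀ i ∈ A, m i ≤ k := by
    intro i hi
    apply Y_le (f := Q i * R i) hS0
    rw [← hS, hQ i hi]; ring
  have hU : ∀ i ∈ A, ∃ U : ℚ[X], Q i = (X + 1) ^ (k - m i) * U ∧ U * R i = S := by
    intro i hi
    have h1 : Q i * R i = (X + 1) ^ (k - m i) * S := by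
      apply mul_left_cancel₀ (pow_ne_zero (m i) hYne)
      rw [← mul_assoc ((X + 1 : ℚ[X]) ^ m i) ((X + 1) ^ (k - m i)), ← pow_add,
        Nat.add_sub_cancel' (hmk i hi), ← hS, hQ i hi]
      ring
    obtain ⟨U, hU⟩ := Y_prime.pow_dvd_of_dvd_mul_right (k - m i)
      (fun h => (hR i hi).ne' ((Y_eval _).1 h)) ⟨S, h1⟩
    refine ⟨U, hU, ?_⟩
    apply mul_left_cancel₀ (pow_ne_zero (k - m i) hYne)
    rw [← h1, hU]; ring
  choose! U hU1 hU2 using hU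
  obtain ⟨i0, hi0, hm0⟩ := hex
  have hnk : n ≤ k := by rw [← hm0]; exact hmk i0 hi0
  set G : ℚ[X] := ∑ i ∈ Finset.range N, X ^ i * (-1) ^ (N - 1 - i) with hG
  have hG1 : G * (X + 1) = X ^ N - (-1) ^ N := by
    have := geom_sum₂_mul (X : ℚ[X]) (-1) N
    rwa [sub_neg_eq_add] at this
  have hGe : G.eval (-1) = N * (-1) ^ (N - 1) := by
    rw [hG, eval_finsetSum, ← geom_sum₂_self]
    refine Finset.sum_congr rfl fun i _ => ?_
    simp
  have hNn : (-1 : ℚ[X]) ^ N = (-1) ^ (n + 1) := by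
    have h1 : (-1 : ℚ[X]) ^ N * (-1) ^ (n + 1) = 1 := by rw [← pow_add]; exact hpar.neg_one_pow
    have h2 : (-1 : ℚ[X]) ^ (n + 1) * (-1) ^ (n + 1) = 1 := by
      rw [← pow_add]; exact Even.neg_one_pow ⟨_, rfl⟩
    exact mul_right_cancel₀ (right_ne_zero_of_mul_eq_one h2) (h1.trans h2.symm)
  have hNn' : (-1 : ℚ) ^ (N - 1) = (-1) ^ n := by
    have h1 : (-1 : ℚ) ^ (N - 1) * (-1) ^ n = 1 := by
      rw [← pow_add]; apply Even.neg_one_pow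
      rw [Nat.even_iff] at hpar ⊢; omega
    have h2 : (-1 : ℚ) ^ n * (-1) ^ n = 1 := by
      rw [← pow_add]; exact Even.neg_one_pow ⟨_, rfl⟩
    exact mul_right_cancel₀ (right_ne_zero_of_mul_eq_one h2) (h1.trans h2.symm)
  set E : ℚ[X] := ∑ i ∈ A, (-1 : ℚ[X]) ^ c i * ((X + 1) ^ (n - m i) * U i) with hE
  have hGE : G * (X + 1) = (X + 1) ^ (k - n) * E := by
    rw [hG1, hNn, ← hid, add_sub_cancel_right, hE, Finset.mul_sum]
    refine Finset.sum_congr rfl fun i hi => ?_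
    have h1 : k - m i = (k - n) + (n - m i) := by
      have := hmk i hi
      have := hmc i hi
      have := hcn i hi
      omega
    rw [hU1 i hi, h1, pow_add]; ring
  set d : ℚ := ∑ i ∈ A, if m i = n then ((R i).eval (-1))⁻¹ else 0 with hd
  have hdpos : 0 < d := by
    apply Finset.sum_pos'
    · intro i hi
      split_ifs
      · exact (inv_pos.2 (hR i hi)).le
      · exact le_refl _
    · exact ⟨i0, hi0, by rw [if_pos hm0]; exact inv_pos.2 (hR i0 hi0)⟩
  have hEe : E.eval (-1) = (-1) ^ n * S.eval (-1) * d := by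
    rw [hE, eval_finsetSum, hd, Finset.mul_sum]
    refine Finset.sum_congr rfl fun i hi => ?_
    have h1 := congrArg (eval (-1)) (hU2 i hi)
    rw [eval_mul] at h1
    have h2 := hmc i hi
    have h3 := hcn i hi
    have h4 := hR i hi
    simp only [eval_mul, eval_pow, eval_neg, eval_one, eval_add, eval_X]
    split_ifs with h
    · have h5 : c i = n := by omega
      rw [h, h5, ← h1]
      field_simp
      simp
    · have h5 : n - m i ≠ 0 := by omega
      simp [h5]
  have hEne : E.eval (-1) ≠ 0 := by
    rw [hEe]
    exact mul_ne_zero (mul_ne_zero (pow_ne_zero _ (by norm_num)) hS0) hdpos.ne'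
  have hN0 : (0 : ℚ) < N := by exact_mod_cast hN
  have hGne : G.eval (-1) ≠ 0 := by
    rw [hGe]
    exact mul_ne_zero hN0.ne' (pow_ne_zero _ (by norm_num))
  have hkn : 1 = k - n := by
    apply Y_uniq hGne hEne
    rw [← hGE]; ring
  rw [← hkn, pow_one, mul_comm] at hGE
  have hGE' := mul_left_cancel₀ hYne hGE
  have h6 := congrArg (eval (-1)) hGE'
  rw [hGe, hEe, hNn'] at h6
  have h7 : (N : ℚ) = S.eval (-1) * d := by
    have : ((-1 : ℚ) ^ n) ≠ 0 := pow_ne_zero _ (by norm_num)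
    apply mul_left_cancel₀ this
    linarith
  refine ⟨S, ?_, ?_⟩
  · have : n + 1 = k := by omega
    rw [this]; exact hS
  · rw [h7] at hN0
    exact pos_of_mul_pos_left hN0 hdpos.le

theorem geom_ord (e : ℕ) : ∃ R : ℚ[X], (∑ j ∈ Finset.range (e + 1), (X : ℚ[X]) ^ j)
    = (X + 1) ^ (if Odd e then 1 else 0) * R ∧ R.eval (-1) ≠ 0 := by
  split_ifs with h
  · obtain ⟨k, rfl⟩ := h
    refine ⟨∑ j ∈ Finset.range (k + 1), X ^ (2 * j), ?_, ?_⟩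
    · have : ∀ k : ℕ, ∑ j ∈ Finset.range (2 * k), (X : ℚ[X]) ^ j
          = (X + 1) * ∑ j ∈ Finset.range k, X ^ (2 * j) := by
        intro k
        induction k with
        | zero => simp
        | succ k ih =>
          rw [Nat.mul_succ, Finset.sum_range_succ, Finset.sum_range_succ, ih,
            Finset.sum_range_succ]
          ring
      rw [pow_one, ← this]
      congr 1
    · rw [eval_finsetSum]
      simp only [eval_pow, eval_X, pow_mul]
      norm_num
      exact_mod_cast Nat.succ_ne_zero k
  · refine ⟨_, by rw [pow_zero, one_mul], ?_⟩
    rw [Nat.not_odd_iff_even] at h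
    have h2 := geom_sum_mul (-1 : ℚ) (e + 1)
    rw [Odd.neg_one_pow (Even.add_one h)] at h2
    rw [eval_finsetSum]
    simp only [eval_pow, eval_X]
    intro h3
    rw [h3] at h2
    norm_num at h2

theorem prod_ord {k : ℕ} (ex : Fin k → ℕ) : ∃ R : ℚ[X],
    (∏ i : Fin k, ∑ j ∈ Finset.range (ex i + 1), (X : ℚ[X]) ^ j)
    = (X + 1) ^ (Finset.univ.filter fun i => Odd (ex i)).card * R ∧ R.eval (-1) ≠ 0 := by
  choose R hR1 hR2 using fun i => geom_ord (ex i)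
  refine ⟨∏ i, R i, ?_, ?_⟩
  · rw [Finset.prod_congr rfl fun i _ => hR1 i, Finset.prod_mul_distrib,
      Finset.prod_pow_eq_pow_sum, Finset.card_filter]
  · rw [eval_prod]
    exact Finset.prod_ne_zero_iff.2 fun i _ => hR2 i

end P8poly


/-! ## Part 9 : main induction -/
section P9
variable {cs : CoxeterSystem M W} (D : AffineData cs)
open Polynomial

theorem PLf {L : Finset W} (hL : (L : Set W) ⊆ D.Jset) {w : W}
    (hw : w ∈ Subgroup.closure (L : Set W)) (hww : w * w = 1) :
    ∃ g ∈ Subgroup.closure (L : Set W), ∃ K : Finset W, K ⊆ L ∧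
      IsTop cs K (g * w * g⁻¹) ∧ Full D K (g * w * g⁻¹) := by
  obtain ⟨g, hg, y, -, -, h1, h2⟩ := PL D hL hw hww
  refine ⟨g, hg, L.filter (fun s => al D s (D.rho g y) = 0), Finset.filter_subset _ _, ?_, ?_⟩
  · rw [Finset.coe_filter]; exact h1
  · rw [Finset.coe_filter]; exact h2

theorem engf {L : Finset W} (hL : (L : Set W) ⊆ D.Jset) :
    ∃ K : Finset W, K ⊆ L ∧ ∃ v ∈ Subgroup.closure (L : Set W), IsTop cs K v ∧ Full D K v ∧
      0 < (QQ D L K).eval (-1) := by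
  obtain ⟨K, hK, v, hv, h1, h2, h3⟩ := eng D hL
  have hf : K.Finite := L.finite_toSet.subset hK
  refine ⟨hf.toFinset, ?_, v, hv, ?_⟩
  · intro x hx; exact hK (hf.mem_toFinset.1 hx)
  · rw [Set.Finite.coe_toFinset]; exact ⟨h1, h2, h3⟩

theorem exists_top_sub {I : Set W} (hI : I ⊆ D.Jset) : ∃ v, IsTop cs I v :=
  exists_isTop cs ((WJ_finite D).subset (Subgroup.closure_mono hI))

theorem full_comm {L : Finset W} (hL : (L : Set W) ⊆ D.Jset) {wL : W} (hwL : IsTop cs L wL)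
    (hf : Full D L wL) {s : W} (hs : s ∈ L) : wL⁻¹ * s * wL = s := by
  have hR := Rf_simple D hL hs
  have hwJ : wL ∈ Subgroup.closure D.Jset := Subgroup.closure_mono hL hwL.1
  have hR' : Rf D (wL⁻¹ * s * wL) := hR.conj' D hwJ
  have hker : ∀ x, al D s x = 0 → al D (wL⁻¹ * s * wL) x = 0 := by
    intro x hx
    rw [← al_conj_zero D hR hwJ, hf s hs x, hx, neg_zero]
  symm
  apply al_nonprop D hR hR' (al D (wL⁻¹ * s * wL) (av D s) / 2)
  apply LinearMap.ext
  intro x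
  have h := hker (x - (al D s x / 2) • av D s) (by
    rw [map_sub, map_smul, (al_spec D hR).2.1, smul_eq_mul]; ring)
  rw [map_sub, map_smul, smul_eq_mul] at h
  rw [LinearMap.smul_apply, smul_eq_mul]
  linarith

theorem Em_mul_refl {s w : W} (hR : Rf D s) :
    Module.finrank ℚ (Em D w) ≤ Module.finrank ℚ (Em D (w * s)) + 1 := by
  set f : Em D w →ₗ[ℚ] ℚ := (al D s).comp (Em D w).subtype with hf
  have h1 := LinearMap.finrank_range_add_finrank_ker f
  have h2 : Module.finrank ℚ (LinearMap.range f) ≤ 1 := by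
    have := Submodule.finrank_le (LinearMap.range f)
    simpa using this
  have h3 : Module.finrank ℚ (LinearMap.ker f) ≤ Module.finrank ℚ (Em D (w * s)) := by
    have hmem : ∀ x : LinearMap.ker f, ((x : Em D w) : VV D) ∈ Em D (w * s) := by
      intro x
      have hx0 : al D s ((x : Em D w) : VV D) = 0 := x.2
      rw [mem_Em, rho_mul_apply, (al_zero_iff D hR _).1 hx0]
      exact (mem_Em D).1 (x : Em D w).2
    let g : LinearMap.ker f →ₗ[ℚ] Em D (w * s) :=
      LinearMap.codRestrict _ ((Em D w).subtype.comp (LinearMap.ker f).subtype) hmem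
    apply LinearMap.finrank_le_finrank_of_injective (f := g)
    intro a b h
    have := congrArg Subtype.val h
    exact Subtype.ext (Subtype.ext this)
  omega

theorem len_parity (g w s : W) (hs : s ∈ Set.range cs.simple) :
    (cs.length (g * (w * s) * g⁻¹) + cs.length w + 1) % 2 = 0 := by
  have a1 := cs.length_mul_mod_two (g * (w * s)) g⁻¹
  have a2 := cs.length_mul_mod_two g (w * s)
  have a3 := cs.length_mul_mod_two w s
  rw [len_of_mem cs hs] at a3
  rw [cs.length_inv] at a1
  omega

theorem main_ind : ∀ (n : ℕ) (L : Finset W), L.card = n → (L : Set W) ⊆ D.Jset →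
    ∀ wL, IsTop cs (L : Set W) wL →
    (∃ R : ℚ[X], PP D L = (X + 1) ^ (Module.finrank ℚ (Em D wL)) * R ∧ 0 < R.eval (-1)) ∧
    (Full D L wL → Even (cs.length wL + L.card)) := by
  intro n
  induction n using Nat.strong_induction_on with
  | _ n ih =>
  intro L hn hL wL hwL
  have hLS := hL.trans (Jset_sub D)
  have ih' : ∀ K : Finset W, K ⊆ L → K ≠ L → ∀ wK, IsTop cs (K : Set W) wK →
      (∃ R : ℚ[X], PP D K = (X + 1) ^ (Module.finrank ℚ (Em D wK)) * R ∧ 0 < R.eval (-1)) ∧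
      (Full D K wK → Even (cs.length wK + K.card)) := by
    intro K hK hne wK hwK
    have hlt := Finset.card_lt_card (lt_of_le_of_ne hK hne)
    exact ih K.card (hn ▸ hlt) K rfl (fun x hx => hL (hK hx)) wK hwK
  by_cases hf : Full D L wL
  · rcases L.eq_empty_or_nonempty with rfl | ⟨s, hs⟩
    · have h1 : wL = 1 := by
        have := hwL.1
        simpa using this
      subst h1
      have h0 := Em_le_card D hL hwL.1
      refine ⟨⟨1, ?_, by simp⟩, fun _ => by simp⟩
      have h00 : Module.finrank ℚ (Em D (1 : W)) = 0 := by simpa using h0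
      rw [h00, Finset.coe_empty, PP_empty]; simp
    have hR := Rf_simple D hL hs
    have hcomm : s * wL = wL * s := by
      have := full_comm D hL hwL hf hs
      rw [mul_assoc, inv_mul_eq_iff_eq_mul] at this
      exact this
    have hww := hwL.mul_self cs hLS
    have hss : s * s = 1 := hR.1.mul_self
    have hsL : s ∈ Subgroup.closure (L : Set W) := Subgroup.subset_closure hs
    have hw2 : (wL * s) * (wL * s) = 1 := by
      rw [mul_assoc, ← mul_assoc s, hcomm, mul_assoc wL s s, hss, mul_one, hww]
    obtain ⟨g, hg, K, hKL, hKt, hKf⟩ := PLf D hL (Subgroup.mul_mem _ hwL.1 hsL) hw2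
    have hKJ : (K : Set W) ⊆ D.Jset := fun x hx => hL (hKL hx)
    have hpar := len_parity (cs := cs) g wL s (hLS hs)
    have hKne : K ≠ L := by
      rintro rfl
      rw [hKt.unique cs hLS hwL] at hpar
      omega
    have hKc : Module.finrank ℚ (Em D (g * (wL * s) * g⁻¹)) = K.card :=
      Em_full D hKJ hKt.1 (hKt.mul_self cs (hKJ.trans (Jset_sub D))) hKf
    have hLc := Em_full D hL hwL.1 hww hf
    have hge := Em_mul_refl D (w := wL) hR
    rw [← Em_conj D g (wL * s), hKc, hLc] at hge
    have hlt := Finset.card_lt_card (lt_of_le_of_ne hKL hKne)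
    have hKcard : K.card + 1 = L.card := by omega
    have hKpar := (ih' K hKL hKne _ hKt).2 hKf
    have hEv : Even (cs.length wL + L.card) := by
      rw [Nat.even_iff] at hKpar ⊢
      omega
    refine ⟨?_, fun _ => hEv⟩
    have hex : ∀ I : Finset W, ∃ (m : ℕ) (R : ℚ[X]), I ⊆ L → I ≠ L → 
        PP D I = (X + 1) ^ m * R ∧ 0 < R.eval (-1) ∧ m ≤ I.card ∧ (I = K → m = K.card) := by
      intro I
      by_cases h : I ⊆ L ∧ I ≠ L
      · have hIJ : (I : Set W) ⊆ D.Jset := fun x hx => hL (h.1 hx)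
        obtain ⟨v, hv⟩ := exists_top_sub D hIJ
        obtain ⟨R, hR1, hR2⟩ := (ih' I h.1 h.2 v hv).1
        refine ⟨_, R, fun _ _ => ⟨hR1, hR2, Em_le_card D hIJ hv.1, ?_⟩⟩
        rintro rfl
        rw [hv.unique cs (hIJ.trans (Jset_sub D)) hKt, hKc]
      · exact ⟨0, 0, fun h1 h2 => absurd ⟨h1, h2⟩ h⟩
    choose m R hmR using hex
    have hmem : ∀ I ∈ L.powerset.erase L, I ⊆ L ∧ I ≠ L := by
      intro I hI
      rw [Finset.mem_erase, Finset.mem_powerset] at hI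
      exact ⟨hI.2, hI.1⟩
    have hN : 0 < cs.length wL := by
      have := hwL.2 s hsL hR.1
      unfold LI at this
      omega
    have hid : ∑ I ∈ L.powerset.erase L, (-1 : ℚ[X]) ^ I.card * QQ D L I + (-1) ^ (K.card + 1)
        = X ^ cs.length wL := by
      rw [← alt_sum D hL hwL, ← Finset.sum_erase_add _ _ (Finset.mem_powerset_self L),
        QQ_self D hL, mul_one, hKcard]
    have := poly_full (L.powerset.erase L) (PP D L) (PP_ne D L) (fun I => QQ D L I) R m
      (fun I => I.card) K.card (cs.length wL)
      (fun I hI => by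
        have h := hmem I hI
        rw [← (hmR I h.1 h.2).1]
        exact PP_eq D hL (fun x hx => h.1 hx))
      (fun I hI => (hmR I (hmem I hI).1 (hmem I hI).2).2.1)
      (fun I hI => (hmR I (hmem I hI).1 (hmem I hI).2).2.2.1)
      (fun I hI => by
        have h := hmem I hI
        have := Finset.card_lt_card (lt_of_le_of_ne h.1 h.2)
        show I.card ≤ K.card
        omega)
      ⟨K, by rw [Finset.mem_erase, Finset.mem_powerset]; exact ⟨hKne, hKL⟩,
        (hmR K hKL hKne).2.2.2 rfl⟩
      hN (by rw [hKcard]; exact hEv) hid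
    rw [hLc, ← hKcard]
    exact this
  · refine ⟨?_, fun h => absurd h hf⟩
    have hww := hwL.mul_self cs hLS
    obtain ⟨K, hKL, v, hv, hKt, hKf, hpos⟩ := engf D hL
    have hKne : K ≠ L := by
      rintro rfl
      rw [hKt.unique cs hLS hwL] at hKf
      exact hf hKf
    obtain ⟨R, hR1, hR2⟩ := (ih' K hKL hKne v hKt).1
    have hP1 : PP D L = (X + 1) ^ (Module.finrank ℚ (Em D v)) * (QQ D L K * R) := by
      rw [PP_eq D hL (I := (K : Set W)) (fun x hx => hKL hx), hR1]; ring
    have hRpos : 0 < (QQ D L K * R).eval (-1) := by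
      rw [eval_mul]; exact mul_pos hpos hR2
    obtain ⟨g, hg, K', hKL', hKt', hKf'⟩ := PLf D hL hwL.1 hww
    have hKne' : K' ≠ L := by
      rintro rfl
      rw [hKt'.unique cs hLS hwL] at hKf'
      exact hf hKf'
    obtain ⟨R', hR1', -⟩ := (ih' K' hKL' hKne' _ hKt').1
    rw [Em_conj] at hR1'
    have hle1 := Em_le D hL hwL hv
    have hle2 : Module.finrank ℚ (Em D wL) ≤ Module.finrank ℚ (Em D v) := by
      apply Y_le (f := QQ D L K' * R') hRpos.ne'
      rw [← hP1, PP_eq D hL (I := (K' : Set W)) (fun x hx => hKL' hx), hR1']; ring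
    refine ⟨QQ D L K * R, ?_, hRpos⟩
    rw [le_antisymm hle2 hle1]
    exact hP1

/-- number of odd exponents of a parabolic subgroup -/
theorem odd_exp {I : Set W} (hI : I ⊆ D.Jset) {v : W} (hv : IsTop cs I v) {k : ℕ} (ex : Fin k → ℕ)
    (hex : (∑ᶠ x : W, if x ∈ Subgroup.closure I then (X : ℤ[X]) ^ cs.length x else 0)
      = ∏ i : Fin k, ∑ j ∈ Finset.range (ex i + 1), (X : ℤ[X]) ^ j) :
    (Finset.univ.filter fun i => Odd (ex i)).card = Module.finrank ℚ (Em D v) := by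
  have hfin : I.Finite := (finite_S D).subset (hI.trans (Jset_sub D))
  have h1 := (main_ind D _ hfin.toFinset rfl (by rw [hfin.coe_toFinset]; exact hI) v
    (by rw [hfin.coe_toFinset]; exact hv)).1
  rw [hfin.coe_toFinset] at h1
  obtain ⟨R, hR1, hR2⟩ := h1
  obtain ⟨R', hR1', hR2'⟩ := prod_ord ex
  apply Y_uniq hR2' hR2.ne'
  rw [← hR1, ← hR1']
  have h2 : (∑ᶠ x : W, if x ∈ Subgroup.closure I then (X : ℤ[X]) ^ cs.length x else 0)
      = ∑ x ∈ WF D I, (X : ℤ[X]) ^ cs.length x := by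
    rw [finsum_eq_sum_of_support_subset (s := WF D I)]
    · refine Finset.sum_congr rfl fun x hx => ?_
      rw [if_pos ((mem_WF D hI).1 hx)]
    · intro x hx
      rw [Finset.mem_coe, mem_WF D hI]
      by_contra hc
      exact hx (by simp [hc])
  rw [h2] at hex
  have h3 := congrArg (Polynomial.map (Int.castRingHom ℚ)) hex
  simp only [Polynomial.map_sum, Polynomial.map_prod, Polynomial.map_pow, Polynomial.map_X] at h3
  unfold PP
  rw [h3]

theorem eNeg_neg {w : W} (hww : w * w = 1) :
    D.eNeg (- D.rho w) + Module.finrank ℚ (Em D w) = D.rank := by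
  have h1 := LinearMap.finrank_range_add_finrank_ker (D.rho w + LinearMap.id)
  have h2 : Module.End.eigenspace (- D.rho w : Module.End ℚ (VV D)) (-1)
      = LinearMap.range (D.rho w + LinearMap.id) := by
    ext x
    rw [Module.End.mem_eigenspace_iff, LinearMap.mem_range]
    constructor
    · intro h
      have h' : D.rho w x = x := by simpa using h
      refine ⟨(2⁻¹ : ℚ) • x, ?_⟩
      rw [LinearMap.add_apply, map_smul, h', LinearMap.id_apply, ← add_smul]
      norm_num
    · rintro ⟨y, rfl⟩
      have : D.rho w (D.rho w y + y) = D.rho w y + y := by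
        rw [map_add, ← rho_mul_apply, hww, rho_one, LinearMap.id_apply, add_comm]
      show -(D.rho w (D.rho w y + y)) = (-1 : ℚ) • (D.rho w y + y)
      rw [this, neg_one_smul]
  unfold AffineData.eNeg
  rw [h2]
  rw [Module.finrank_fin_fun] at h1
  exact h1

theorem phi_final (mu b : W) (hmu : D.IsDominant mu) (hb_mem : b ∈ D.DCoset mu)
    (hb_min : ∀ y ∈ D.DCoset mu, cs.length b ≤ cs.length y)
    (kJ : ℕ) (exJ : Fin kJ → ℕ)
    (hexJ : (∑ᶠ x : W, if x ∈ D.WJ then (X : ℤ[X]) ^ cs.length x else 0)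
        = ∏ i : Fin kJ, ∑ j ∈ Finset.range (exJ i + 1), (X : ℤ[X]) ^ j)
    (kH : ℕ) (exH : Fin kH → ℕ)
    (hexH : (∑ᶠ x : W, if x ∈ D.WHstar b then (X : ℤ[X]) ^ cs.length x else 0)
        = ∏ i : Fin kH, ∑ j ∈ Finset.range (exH i + 1), (X : ℤ[X]) ^ j) :
    D.phi b = ((Finset.univ.filter fun i => Odd (exJ i)).card : ℤ)
        - ((Finset.univ.filter fun i => Odd (exH i)).card : ℤ) := by
  obtain ⟨wH, hwH, hpr⟩ := pr_b D hmu hb_mem hb_min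
  have hHS := (Hset_sub D b).trans (Jset_sub D)
  have hJ := odd_exp D (le_refl D.Jset) (isTop_wJ D) exJ hexJ
  rw [poly_Hstar D b] at hexH
  have hH := odd_exp D (Hset_sub D b) hwH exH hexH
  have hJJ := (isTop_wJ D).mul_self cs (Jset_sub D)
  have e1 := eNeg_neg D hJJ
  have e2 := eNeg_neg D (hwH.mul_self cs hHS)
  rw [hJ, hH]
  unfold AffineData.phi AffineData.Amap
  rw [hpr, mul_assoc, hJJ, mul_one, one_mul]
  omega

end P9

/-- One has `φ(b) = n_J − n_{H*}`, where `n_J` and `n_{H*}` denote the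
numbers of odd exponents of the finite Weyl groups `W_J` and `W_{H*}` respectively, and `b`
is the shortest element of the double coset `W_J μ W_J`. -/
theorem phi_b_eq_nJ_sub_nHstar (cs : CoxeterSystem M W) (D : AffineData cs)
    (mu b : W) (hmu : D.IsDominant mu)
    (hb_mem : b ∈ D.DCoset mu)
    (hb_min : ∀ y ∈ D.DCoset mu, cs.length b ≤ cs.length y)
    (kJ : ℕ) (hkJ : kJ = D.Jset.ncard) (exJ : Fin kJ → ℕ) (hexJ_pos : ∀ i, 0 < exJ i)
    (hexJ : (∑ᶠ x : W, if x ∈ D.WJ then (Polynomial.X : Polynomial ℤ) ^ cs.length x else 0)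
        = ∏ i : Fin kJ, ∑ j ∈ Finset.range (exJ i + 1), (Polynomial.X : Polynomial ℤ) ^ j)
    (kH : ℕ) (hkH : kH = (D.Hstar b).ncard) (exH : Fin kH → ℕ) (hexH_pos : ∀ i, 0 < exH i)
    (hexH : (∑ᶠ x : W, if x ∈ D.WHstar b
          then (Polynomial.X : Polynomial ℤ) ^ cs.length x else 0)
        = ∏ i : Fin kH, ∑ j ∈ Finset.range (exH i + 1), (Polynomial.X : Polynomial ℤ) ^ j) :
    D.phi b = ((Finset.univ.filter fun i => Odd (exJ i)).card : ℤ)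
        - ((Finset.univ.filter fun i => Odd (exH i)).card : ℤ) := by
  exact phi_final D mu b hmu hb_mem hb_min kJ exJ hexJ kH exH hexH

end LY
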